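/- If q is an odd prime power or a product of two distinct odd primes, then the Erdős conjecture is true mod q, i.e. there is no Erdősian function f mod q with Σ_{n≥1} f(n)/n = 0. -/

import Mathlib

open Filter Topology Finset

/-- `f : ℕ → ℤ` is Erdősian mod `q`: periodic with period `q`, takes values `±1`
off multiples of `q`, and `0` on multiples of `q`. -/
def IsErdosian (q : ℕ) (f : ℕ → ℤ) : Prop :=
  (∀ n : ℕ, 1 ≤ n → f (n + q) = f n) ∧
  (∀ n : ℕ, 1 ≤ n → ¬ q ∣ n → f n = 1 ∨ f n = -1) ∧
  (∀ n : ℕ, 1 ≤ n → q ∣ n → f n = 0)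

/-- The Erdős conjecture is false mod `q`: there is an Erdősian function mod `q`
whose partial sums `∑_{n=1}^N f(n)/n` tend to `0`. -/
def ErdosConjectureFalse (q : ℕ) : Prop :=
  ∃ f : ℕ → ℤ, IsErdosian q f ∧
    Tendsto (fun N : ℕ => ∑ n ∈ Finset.Icc 1 N, (f n : ℝ) / n) atTop (nhds 0)

/-- The Erdős conjecture holds (is true) mod `q`. -/
def ErdosConjectureHolds (q : ℕ) : Prop := ¬ ErdosConjectureFalse q

/-!
Lift an Erdősian `f` to `F : ℤ/q → ℤ`. If `∑ F(n)/n` converges, then `F` has mean zero, the sum is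
the value at `1` of the `L`-function of `F`, and the discrete Fourier transform writes this value
as a linear form in the numbers `log (1 - ζ)`, `ζ ≠ 1` a `q`-th root of unity, with coefficients
in the `q`-th cyclotomic field. By a theorem of Baker type (an auxiliary-function argument), the
vanishing of such a form is stable under the Galois group. Hence `L(F(u ·), 1) = 0` for every unit
`u` of `ℤ/q`.

Decompose `F` under the action of `(ℤ/q)ˣ`. The component belonging to a character `χ` has
Dirichlet series `(∑ₘ Φ(m) m⁻ˢ) L(χ, s)`, where `m` runs over the integers composed of primes
dividing `q`. As `L(χ, 1) ≠ 0`, the first factor vanishes at `s = 1`, and summing over `χ` gives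
`∑ₘ F(m)/m = 0`. But `∑ₘ 1/m = q/φ(q)`, to which the multiples of `q` contribute `1/φ(q)`, so
the term `F(1) = ±1` can only be cancelled if `2 φ(q) ≤ q - 1`.
-/

/-! ### Schwarz's lemma for exponential sums -/

theorem differentiable_dslope {G : ℂ → ℂ} (hG : Differentiable ℂ G) (t : ℂ) :
    Differentiable ℂ (dslope G t) := by
  rw [← differentiableOn_univ] at hG ⊢
  exact (Complex.differentiableOn_dslope univ_mem).2 hG

theorem exists_eq_sub_pow_mul {G : ℂ → ℂ} (hG : Differentiable ℂ G) {t : ℂ} {k : ℕ}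
    (hk : (k : ℕ∞) ≤ analyticOrderAt G t) :
    ∃ H : ℂ → ℂ, Differentiable ℂ H ∧ ∀ z, G z = (z - t) ^ k * H z := by
  induction k generalizing G with
  | zero => exact ⟨G, hG, by simp⟩
  | succ k ih =>
    have hGt : G t = 0 := apply_eq_zero_of_analyticOrderAt_ne_zero (by
      rintro h
      simp [h] at hk)
    have hslope : G = (· - t) * dslope G t := by
      ext z
      simpa [hGt] using (sub_smul_dslope G t z).symm
    have hdiff := differentiable_dslope hG t
    have horder : (k : ℕ∞) ≤ analyticOrderAt (dslope G t) t := by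
      rw [hslope, analyticOrderAt_mul (by fun_prop) (hdiff.analyticAt t),
        analyticOrderAt_id_sub_const_self, Nat.cast_add, Nat.cast_one, add_comm] at hk
      exact (ENat.add_le_add_iff_left ENat.one_ne_top).1 hk
    obtain ⟨H, hH, hGH⟩ := ih hdiff horder
    refine ⟨H, hH, fun z => ?_⟩
    rw [hslope, Pi.mul_apply, hGH]
    ring

theorem exists_eq_prod_sub_pow_mul {G : ℂ → ℂ} (hG : Differentiable ℂ G) {P : Finset ℂ} {k : ℕ}
    (hP : ∀ t ∈ P, (k : ℕ∞) ≤ analyticOrderAt G t) :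
    ∃ H : ℂ → ℂ, Differentiable ℂ H ∧ ∀ z, G z = (∏ t ∈ P, (z - t) ^ k) * H z := by
  induction P using Finset.induction_on with
  | empty => exact ⟨G, hG, by simp⟩
  | insert a P ha ih =>
    obtain ⟨H, hH, hGH⟩ := ih fun t ht => hP t (mem_insert_of_mem ht)
    have hprod : Differentiable ℂ fun z : ℂ => ∏ t ∈ P, (z - t) ^ k := by fun_prop
    have hprod_order : analyticOrderAt (fun z : ℂ => ∏ t ∈ P, (z - t) ^ k) a = 0 := by
      rw [(hprod.analyticAt a).analyticOrderAt_eq_zero]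
      exact prod_ne_zero_iff.2 fun t ht =>
        pow_ne_zero _ (sub_ne_zero.2 (ne_of_mem_of_not_mem ht ha).symm)
    have horder : (k : ℕ∞) ≤ analyticOrderAt H a := by
      have hGa := hP a (mem_insert_self a P)
      rwa [show G = (fun z => ∏ t ∈ P, (z - t) ^ k) * H from funext hGH,
        analyticOrderAt_mul (hprod.analyticAt a) (hH.analyticAt a), hprod_order, zero_add] at hGa
    obtain ⟨H', hH', hHH'⟩ := exists_eq_sub_pow_mul hH horder
    refine ⟨H', hH', fun z => ?_⟩
    rw [hGH, hHH', prod_insert ha]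
    ring

theorem norm_le_of_zeros {G : ℂ → ℂ} (hG : Differentiable ℂ G) {P : Finset ℂ} {k : ℕ}
    (hP : ∀ t ∈ P, (k : ℕ∞) ≤ analyticOrderAt G t) {ρ R M : ℝ} (hR : 0 < R) (hρR : 2 * ρ ≤ R)
    (hPρ : ∀ t ∈ P, ‖t‖ ≤ ρ) (hM : ∀ z : ℂ, ‖z‖ = R → ‖G z‖ ≤ M) {z : ℂ} (hz : ‖z‖ ≤ R)
    (hzP : ∀ t ∈ P, ‖z - t‖ ≤ ρ) :
    ‖G z‖ ≤ (2 * ρ / R) ^ (#P * k) * M := by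
  obtain ⟨H, hH, hGH⟩ := exists_eq_prod_sub_pow_mul hG hP
  have hH_sphere : ∀ w : ℂ, ‖w‖ = R → ‖H w‖ ≤ M / (R / 2) ^ (#P * k) := by
    intro w hw
    have hprod : (R / 2) ^ (#P * k) ≤ ‖∏ t ∈ P, (w - t) ^ k‖ := by
      rw [norm_prod, mul_comm, pow_mul, ← prod_const]
      refine prod_le_prod (fun _ _ => by positivity) fun t ht => ?_
      rw [norm_pow]
      gcongr
      linarith [norm_sub_norm_le w t, hPρ t ht]
    rw [le_div_iff₀ (by positivity), mul_comm]
    calc (R / 2) ^ (#P * k) * ‖H w‖ ≤ ‖∏ t ∈ P, (w - t) ^ k‖ * ‖H w‖ := by gcongr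
      _ = ‖G w‖ := by rw [hGH, norm_mul]
      _ ≤ M := hM w hw
  have hHz : ‖H z‖ ≤ M / (R / 2) ^ (#P * k) := by
    refine Complex.norm_le_of_forall_mem_frontier_norm_le (U := Metric.ball 0 R)
      Metric.isBounded_ball hH.diffContOnCl (fun w hw => hH_sphere w ?_) ?_
    · rwa [frontier_ball _ hR.ne', mem_sphere_zero_iff_norm] at hw
    · rwa [closure_ball _ hR.ne', mem_closedBall_zero_iff]
  have hprod : ‖∏ t ∈ P, (z - t) ^ k‖ ≤ ρ ^ (#P * k) := by
    rw [norm_prod, mul_comm, pow_mul, ← prod_const]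
    refine prod_le_prod (fun _ _ => by positivity) fun t ht => ?_
    rw [norm_pow]
    exact pow_le_pow_left₀ (norm_nonneg _) (hzP t ht) k
  calc ‖G z‖ = ‖∏ t ∈ P, (z - t) ^ k‖ * ‖H z‖ := by rw [hGH, norm_mul]
    _ ≤ ρ ^ (#P * k) * (M / (R / 2) ^ (#P * k)) :=
      mul_le_mul hprod hHz (norm_nonneg _) ((norm_nonneg _).trans hprod)
    _ = (2 * ρ / R) ^ (#P * k) * M := by
      rw [show 2 * ρ / R = ρ / (R / 2) by field_simp, div_pow ρ, mul_div_assoc',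
        div_mul_eq_mul_div]

section ExpSum

variable {Λ : Type*} [Fintype Λ] {g a : Λ → ℂ}

theorem iteratedDeriv_sum_mul_exp (g a : Λ → ℂ) (k : ℕ) :
    iteratedDeriv k (fun z : ℂ => ∑ l, g l * Complex.exp (a l * z)) =
      fun z => ∑ l, g l * a l ^ k * Complex.exp (a l * z) := by
  induction k with
  | zero => simp
  | succ k ih =>
    rw [iteratedDeriv_succ, ih]
    ext z
    have hderiv : HasDerivAt (fun z : ℂ => ∑ l, g l * a l ^ k * Complex.exp (a l * z))
        (∑ l, g l * a l ^ k * (Complex.exp (a l * z) * (a l * 1))) z :=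
      HasDerivAt.fun_sum fun l _ => (((hasDerivAt_id z).const_mul (a l)).cexp).const_mul _
    rw [hderiv.deriv]
    exact sum_congr rfl fun l _ => by ring

theorem norm_sum_mul_exp_le {A : ℝ} (ha : ∀ l, ‖a l‖ ≤ A) (z : ℂ) :
    ‖∑ l, g l * Complex.exp (a l * z)‖ ≤ (∑ l, ‖g l‖) * Real.exp (A * ‖z‖) := by
  rw [sum_mul]
  refine norm_sum_le_of_le _ fun l _ => ?_
  rw [norm_mul]
  gcongr
  refine (Complex.norm_exp_le_exp_norm _).trans (Real.exp_le_exp.2 ?_)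
  rw [norm_mul]
  gcongr
  exact ha l

theorem norm_natCast_sub_natCast_le {s t S : ℕ} (hs : s < S) (ht : t < S) :
    ‖(s : ℂ) - t‖ ≤ S - 1 := by
  rw [← Complex.ofReal_natCast, ← Complex.ofReal_natCast, ← Complex.ofReal_sub, Complex.norm_real,
    Real.norm_eq_abs, abs_le]
  have hs' : (s : ℝ) + 1 ≤ S := mod_cast hs
  have ht' : (t : ℝ) + 1 ≤ S := mod_cast ht
  constructor <;> linarith [s.cast_nonneg (α := ℝ), t.cast_nonneg (α := ℝ)]

theorem norm_sum_mul_pow_mul_exp_le_of_zeros {A R : ℝ} {S k : ℕ} (ha : ∀ l, ‖a l‖ ≤ A)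
    (hSR : 2 * S ≤ R)
    (hzero : ∀ t < S, ∀ j < k, ∑ l, g l * a l ^ j * Complex.exp (a l * t) = 0)
    {s : ℕ} (hs : s < S) :
    ‖∑ l, g l * a l ^ k * Complex.exp (a l * s)‖ ≤
      k.factorial * ((2 * S / R) ^ (S * k) * ((∑ l, ‖g l‖) * Real.exp (A * R))) := by
  set G : ℂ → ℂ := fun z => ∑ l, g l * Complex.exp (a l * z)
  have hG : Differentiable ℂ G := by fun_prop
  have hs_le : (s : ℝ) + 1 ≤ S := mod_cast hs
  have hR : 0 < R := by linarith [s.cast_nonneg (α := ℝ)]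
  set P : Finset ℂ := (range S).image Nat.cast
  have hP : ∀ t ∈ P, (k : ℕ∞) ≤ analyticOrderAt G t := by
    refine forall_mem_image.2 fun t ht => ?_
    rw [natCast_le_analyticOrderAt_iff_iteratedDeriv_eq_zero (hG.analyticAt _)]
    intro j hj
    rw [iteratedDeriv_sum_mul_exp]
    exact hzero t (mem_range.1 ht) j hj
  have hP_card : #P = S := by rw [card_image_of_injective _ Nat.cast_injective, card_range]
  have hP_norm : ∀ t ∈ P, ‖t‖ ≤ S := by
    refine forall_mem_image.2 fun t ht => ?_
    rw [Complex.norm_natCast]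
    exact mod_cast (mem_range.1 ht).le
  have hcircle : ∀ z ∈ Metric.sphere (s : ℂ) 1,
      ‖G z‖ ≤ (2 * S / R) ^ (S * k) * ((∑ l, ‖g l‖) * Real.exp (A * R)) := by
    intro z hz
    rw [mem_sphere_iff_norm] at hz
    have hzR : ‖z‖ ≤ R := by
      have := norm_le_norm_sub_add z s
      rw [hz, Complex.norm_natCast] at this
      linarith
    have hzP : ∀ t ∈ P, ‖z - t‖ ≤ S := by
      refine forall_mem_image.2 fun t ht => ?_
      linarith [norm_sub_le_norm_sub_add_norm_sub z s t,
        norm_natCast_sub_natCast_le hs (mem_range.1 ht)]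
    have := norm_le_of_zeros hG hP hR hSR hP_norm
      (fun w hw => (norm_sum_mul_exp_le ha w).trans_eq (by rw [hw])) hzR hzP
    rwa [hP_card] at this
  have := Complex.norm_iteratedDeriv_le_of_forall_mem_sphere_norm_le k one_pos hG.diffContOnCl
    hcircle
  rw [iteratedDeriv_sum_mul_exp] at this
  simpa using this

end ExpSum

/-! ### Extrapolation for exponential sums in several variables -/

theorem norm_multiset_prod_map_le {ι : Type*} {u : ι → ℂ} {A : ℝ} (hu : ∀ i, ‖u i‖ ≤ A)
    (v : Multiset ι) : ‖(v.map u).prod‖ ≤ A ^ v.card := by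
  induction v using Multiset.induction with
  | empty => simp
  | cons i v ih =>
    rw [Multiset.map_cons, Multiset.prod_cons, norm_mul, Multiset.card_cons, pow_succ']
    exact mul_le_mul (hu i) ih (norm_nonneg _) ((norm_nonneg _).trans (hu i))

theorem exists_card_le_card_mul_count {I : Type*} [Fintype I] [DecidableEq I] [Nonempty I]
    (v : Multiset I) :
    ∃ i, v.card ≤ Fintype.card I * v.count i := by
  have hsum : ∑ _i : I, v.card ≤ ∑ i, Fintype.card I * v.count i := by
    rw [← mul_sum, Multiset.sum_count_eq_card fun i _ => mem_univ i, sum_const, smul_eq_mul,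
      card_univ]
  obtain ⟨i, -, hi⟩ := exists_le_of_sum_le univ_nonempty hsum
  exact ⟨i, hi⟩

section MixedExpSum

variable {Λ I J : Type*} [Fintype I] {p : Λ → ℂ} {a : Λ → I → ℂ} {b : Λ → J → ℂ} {s : I → ℕ}

/-- The coefficient of `exp (t * a l i)` when the `v`-th derivative of
`p l * exp (∑ i, z i * a l i)` is restricted to the line through `s` parallel to the `i`-th
axis. -/
noncomputable def lineCoeff [DecidableEq I] (p : Λ → ℂ) (a : Λ → I → ℂ) (v : Multiset I)
    (s : I → ℕ) (i : I) (l : Λ) : ℂ :=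
  p l * (v.map (a l)).prod * Complex.exp (∑ i' ∈ univ.erase i, s i' * a l i')

theorem sum_update_mul [DecidableEq I] (a : I → ℂ) (s : I → ℕ) (i : I) (t : ℕ) :
    ∑ i', (Function.update s i t i' : ℂ) * a i' =
      (∑ i' ∈ univ.erase i, s i' * a i') + a i * t := by
  rw [← sum_erase_add _ _ (mem_univ i), Function.update_self, mul_comm (t : ℂ)]
  congr 1
  exact sum_congr rfl fun i' hi' => by rw [Function.update_of_ne (ne_of_mem_erase hi')]

theorem norm_lineCoeff_le [DecidableEq I] {A P : ℝ} (hA1 : 1 ≤ A) (hA : ∀ l i, ‖a l i‖ ≤ A)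
    (hP : ∀ l, ‖p l‖ ≤ P) {S Y : ℕ} (hs : ∀ i, s i < S) {v : Multiset I} (hv : v.card ≤ Y)
    (i : I) (l : Λ) :
    ‖lineCoeff p a v s i l‖ ≤ P * A ^ Y * Real.exp (Fintype.card I * (S * A)) := by
  have hP0 : 0 ≤ P := (norm_nonneg _).trans (hP l)
  have hexp : ‖∑ i' ∈ univ.erase i, (s i' : ℂ) * a l i'‖ ≤ Fintype.card I * (S * A) := by
    refine (norm_sum_le_of_le _ (f := fun i' => _) (n := fun _ => S * A) fun i' _ => ?_).trans ?_
    · rw [norm_mul, Complex.norm_natCast]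
      gcongr
      · exact (hs i').le
      · exact hA l i'
    · rw [sum_const, nsmul_eq_mul]
      gcongr
      exact card_le_univ _
  rw [lineCoeff, norm_mul, norm_mul]
  gcongr
  · exact hP l
  · exact (norm_multiset_prod_map_le (hA l) v).trans (pow_le_pow_right₀ hA1 hv)
  · exact (Complex.norm_exp_le_exp_norm _).trans (Real.exp_le_exp.2 hexp)

variable [Fintype Λ]

/-- The value at the lattice point `s` of a mixed partial derivative of
`F(z) = ∑ l, p l * exp (∑ i, z i * a l i)`: the multiset `v` lists differentiations along the
coordinates `z i`, and the multiset `w` lists differentiations along directions which multiply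
the `l`-th term by `b l j`. -/
noncomputable def mixedExpSum (p : Λ → ℂ) (a : Λ → I → ℂ) (b : Λ → J → ℂ) (w : Multiset J)
    (v : Multiset I) (s : I → ℕ) : ℂ :=
  ∑ l, p l * (w.map (b l)).prod * (v.map (a l)).prod * Complex.exp (∑ i, s i * a l i)

theorem mixedExpSum_cons_right [Fintype J] {x : I → J → ℂ}
    (hab : ∀ l i, a l i = ∑ j, x i j * b l j) (w : Multiset J) (i : I) (v : Multiset I) :
    mixedExpSum p a b w (i ::ₘ v) s = ∑ j, x i j * mixedExpSum p a b (j ::ₘ w) v s := by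
  simp only [mixedExpSum, Multiset.map_cons, Multiset.prod_cons, mul_sum]
  rw [sum_comm]
  refine sum_congr rfl fun l _ => ?_
  rw [hab l i, sum_mul, mul_sum, sum_mul]
  exact sum_congr rfl fun j _ => by ring

theorem mixedExpSum_cons_left {c : J → I → ℂ} (hba : ∀ l j, b l j = ∑ i, c j i * a l i)
    (j : J) (w : Multiset J) (v : Multiset I) :
    mixedExpSum p a b (j ::ₘ w) v s = ∑ i, c j i * mixedExpSum p a b w (i ::ₘ v) s := by
  simp only [mixedExpSum, Multiset.map_cons, Multiset.prod_cons, mul_sum]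
  rw [sum_comm]
  refine sum_congr rfl fun l _ => ?_
  rw [hba l j, sum_mul, mul_sum, sum_mul, sum_mul]
  exact sum_congr rfl fun i _ => by ring

theorem mixedExpSum_eq_zero [Fintype J] {x : I → J → ℂ}
    (hab : ∀ l i, a l i = ∑ j, x i j * b l j) {Y : ℕ}
    (hzero : ∀ w : Multiset J, w.card < Y → mixedExpSum p a b w 0 s = 0)
    (w : Multiset J) (v : Multiset I) (hwv : w.card + v.card < Y) :
    mixedExpSum p a b w v s = 0 := by
  induction v using Multiset.induction generalizing w with
  | empty => exact hzero w (by simpa using hwv)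
  | cons i v ih =>
    rw [mixedExpSum_cons_right hab]
    refine sum_eq_zero fun j _ => ?_
    rw [ih (j ::ₘ w) (by rw [Multiset.card_cons] at hwv ⊢; omega), mul_zero]

theorem norm_mixedExpSum_le {c : J → I → ℂ} (hba : ∀ l j, b l j = ∑ i, c j i * a l i)
    {C M : ℝ} (hC : ∀ j, ∑ i, ‖c j i‖ ≤ C) (hM : 0 ≤ M) {Y : ℕ}
    (hpure : ∀ v : Multiset I, v.card = Y → ‖mixedExpSum p a b 0 v s‖ ≤ M)
    (w : Multiset J) (v : Multiset I) (hwv : w.card + v.card = Y) :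
    ‖mixedExpSum p a b w v s‖ ≤ C ^ w.card * M := by
  induction w using Multiset.induction generalizing v with
  | empty => simpa using hpure v (by simpa using hwv)
  | cons j w ih =>
    have hC0 : 0 ≤ C := (sum_nonneg fun i _ => norm_nonneg _).trans (hC j)
    rw [mixedExpSum_cons_left hba]
    calc ‖∑ i, c j i * mixedExpSum p a b w (i ::ₘ v) s‖
        ≤ ∑ i, ‖c j i‖ * (C ^ w.card * M) := by
          refine norm_sum_le_of_le _ fun i _ => ?_
          rw [norm_mul]
          gcongr
          exact ih (i ::ₘ v) (by rw [Multiset.card_cons] at hwv ⊢; omega)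
      _ ≤ C * (C ^ w.card * M) := by
          rw [← sum_mul]
          gcongr
          exact hC j
      _ = C ^ (j ::ₘ w).card * M := by
          rw [Multiset.card_cons]
          ring

theorem mixedExpSum_add_replicate [DecidableEq I] (v : Multiset I) (i : I) (j t : ℕ) :
    mixedExpSum p a b 0 (v + Multiset.replicate j i) (Function.update s i t) =
      ∑ l, lineCoeff p a v s i l * a l i ^ j * Complex.exp (a l i * t) := by
  refine sum_congr rfl fun l _ => ?_
  rw [sum_update_mul, Complex.exp_add, Multiset.map_add, Multiset.prod_add,
    Multiset.map_replicate, Multiset.prod_replicate, Multiset.map_zero, Multiset.prod_zero,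
    lineCoeff]
  ring

theorem norm_mixedExpSum_add_replicate_le [Fintype J] [DecidableEq I] {x : I → J → ℂ}
    (hab : ∀ l i, a l i = ∑ j, x i j * b l j) {A R : ℝ} (hA : ∀ l i, ‖a l i‖ ≤ A) {S : ℕ}
    (hSR : 2 * S ≤ R) (v : Multiset I) (i : I) (k : ℕ)
    (hzero : ∀ w : Multiset J, w.card < v.card + k → ∀ s : I → ℕ, (∀ i, s i < S) →
      mixedExpSum p a b w 0 s = 0) (hs : ∀ i, s i < S) :
    ‖mixedExpSum p a b 0 (v + Multiset.replicate k i) s‖ ≤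
      k.factorial * ((2 * S / R) ^ (S * k) *
        ((∑ l, ‖lineCoeff p a v s i l‖) * Real.exp (A * R))) := by
  rw [← Function.update_eq_self i s, mixedExpSum_add_replicate, Function.update_eq_self]
  refine norm_sum_mul_pow_mul_exp_le_of_zeros (fun l => hA l i) hSR (fun t ht j hj => ?_) (hs i)
  rw [← mixedExpSum_add_replicate (b := b)]
  refine mixedExpSum_eq_zero hab (fun w hw => hzero w hw _ fun i' => ?_) 0 _ (by simpa using hj)
  obtain rfl | hi' := eq_or_ne i' i
  · rwa [Function.update_self]
  · rw [Function.update_of_ne hi']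
    exact hs i'

theorem norm_mixedExpSum_le_of_zeros [Fintype J] [Nonempty I] {x : I → J → ℂ} {c : J → I → ℂ}
    (hab : ∀ l i, a l i = ∑ j, x i j * b l j) (hba : ∀ l j, b l j = ∑ i, c j i * a l i)
    {C A P R z : ℝ} (hC : ∀ j, ∑ i, ‖c j i‖ ≤ C) (hA1 : 1 ≤ A) (hA : ∀ l i, ‖a l i‖ ≤ A)
    (hP0 : 0 ≤ P) (hP : ∀ l, ‖p l‖ ≤ P) {S Y : ℕ} (hSR : 2 * S ≤ R)
    (hz : ∀ k, Y ≤ Fintype.card I * k → (2 * S / R) ^ (S * k) ≤ z)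
    (hzero : ∀ w : Multiset J, w.card < Y → ∀ s : I → ℕ, (∀ i, s i < S) →
      mixedExpSum p a b w 0 s = 0)
    {w : Multiset J} (hw : w.card = Y) (hs : ∀ i, s i < S) :
    ‖mixedExpSum p a b w 0 s‖ ≤ C ^ Y * (Y.factorial * (z *
      (Fintype.card Λ * (P * A ^ Y * Real.exp (Fintype.card I * (S * A))) *
        Real.exp (A * R)))) := by
  classical
  have hR0 : 0 ≤ R := le_trans (by positivity) hSR
  have hz0 : 0 ≤ z :=
    le_trans (by positivity) (hz Y (Nat.le_mul_of_pos_left Y Fintype.card_pos))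
  rw [← hw]
  refine norm_mixedExpSum_le hba hC (by positivity) (fun v hv => ?_) w 0 (add_zero _)
  obtain ⟨i, hi⟩ := exists_card_le_card_mul_count v
  obtain ⟨u, hu⟩ := Multiset.le_iff_exists_add.1 (Multiset.le_count_iff_replicate_le.1 le_rfl :
    Multiset.replicate (v.count i) i ≤ v)
  generalize v.count i = k at hi hu
  obtain rfl : v = u + Multiset.replicate k i := hu.trans (add_comm _ _)
  have hcard : u.card + k = Y := by simpa [hw] using hv
  rw [hv, hw] at hi
  refine (norm_mixedExpSum_add_replicate_le hab hA hSR u i k (hcard ▸ hzero) hs).trans ?_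
  have hcoeff : ∑ l, ‖lineCoeff p a u s i l‖ ≤
      Fintype.card Λ * (P * A ^ Y * Real.exp (Fintype.card I * (S * A))) := by
    rw [← nsmul_eq_mul, ← card_univ]
    exact sum_le_card_nsmul _ _ _ fun l _ => norm_lineCoeff_le hA1 hA hP hs (by omega) i l
  rw [hw]
  gcongr
  · omega
  · exact hz k hi

end MixedExpSum

/-! ### Houses of algebraic numbers -/

open NumberField

universe u

section House

variable {K : Type u} [Field K] [NumberField K]

theorem house_le_of_forall_norm_le {x : K} {B : ℝ} (hB : 0 ≤ B) (h : ∀ τ : K →+* ℂ, ‖τ x‖ ≤ B) :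
    house x ≤ B := by
  rw [house, pi_norm_le_iff_of_nonneg hB]
  exact h

theorem house_algEquiv_le (σ : K ≃ₐ[ℚ] K) (x : K) : house (σ x) ≤ house x :=
  house_le_of_forall_norm_le (house_nonneg _) fun τ =>
    norm_embedding_le_house x (τ.comp (σ : K →+* K))

theorem house_mul_le_mul {x y : K} {A B : ℝ} (hx : house x ≤ A) (hy : house y ≤ B) :
    house (x * y) ≤ A * B :=
  (house_mul_le x y).trans (mul_le_mul hx hy (house_nonneg _) ((house_nonneg _).trans hx))

theorem house_pow_le_pow {x : K} {B : ℝ} (hx : house x ≤ B) (k : ℕ) : house (x ^ k) ≤ B ^ k :=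
  (house_pow_le x k).trans (pow_le_pow_left₀ (house_nonneg x) hx k)

theorem house_natCast (d : ℕ) : house (d : K) = d := by
  simpa using house_intCast (K := K) d

theorem house_multiset_prod_map_le {ι : Type*} {f : ι → K} {B : ℝ} (hf : ∀ i, house (f i) ≤ B)
    (w : Multiset ι) : house (w.map f).prod ≤ B ^ w.card := by
  induction w using Multiset.induction with
  | empty => simpa using (house_natCast (K := K) 1).le
  | cons i w ih =>
    rw [Multiset.map_cons, Multiset.prod_cons, Multiset.card_cons, pow_succ']
    exact house_mul_le_mul (hf i) ih

theorem house_prod_le_pow {ι : Type*} [Fintype ι] {f : ι → K} {B : ℝ}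
    (hf : ∀ i, house (f i) ≤ B) : house (∏ i, f i) ≤ B ^ Fintype.card ι :=
  house_multiset_prod_map_le hf univ.val

theorem one_le_norm_mul_house_pow (φ : K →+* ℂ) {x : K} (hx : IsIntegral ℤ x) (hx0 : x ≠ 0) :
    1 ≤ ‖φ x‖ * house x ^ (Module.finrank ℚ K - 1) := by
  refine le_trans ?_ (norm_norm_le_norm_mul_house_pow x φ)
  obtain ⟨N, hN⟩ : ∃ N : ℤ, (N : ℚ) = Algebra.norm ℚ x :=
    IsIntegrallyClosed.isIntegral_iff.1 (Algebra.isIntegral_norm ℚ hx)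
  have hN0 : N ≠ 0 := by
    rintro rfl
    exact hx0 (Algebra.norm_eq_zero_iff.1 (hN.symm.trans Int.cast_zero))
  rw [← hN, Int.norm_cast_rat, Int.norm_eq_abs]
  exact mod_cast Int.one_le_abs hN0

/-- Siegel's lemma, with the exponent in the solution bound simplified to `1` for systems with at
least twice as many unknowns as equations. -/
theorem eventually_exists_mulVec_eq_zero (K : Type u) [Field K] [NumberField K] :
    ∀ᶠ c : ℝ in atTop, ∀ (ρ γ : Type u) [Fintype ρ] [Fintype γ] (M : Matrix ρ γ (𝓞 K)) (A : ℝ),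
      M ≠ 0 → 2 * Fintype.card ρ ≤ Fintype.card γ → 1 ≤ A → (∀ i j, house (M i j : K) ≤ A) →
      ∃ ξ : γ → 𝓞 K, ξ ≠ 0 ∧ M.mulVec ξ = 0 ∧
        ∀ j, house (ξ j : K) ≤ c * (c * Fintype.card γ * A) := by
  classical
  obtain ⟨c₀, hc₀⟩ : ∃ c₀ : ℝ, ∀ (ρ γ : Type u) [Fintype ρ] [Fintype γ] (M : Matrix ρ γ (𝓞 K)),
      M ≠ 0 → 0 < Fintype.card ρ → Fintype.card ρ < Fintype.card γ → ∀ A : ℝ,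
      (∀ i j, house (M i j : K) ≤ A) → ∃ ξ : γ → 𝓞 K, ξ ≠ 0 ∧ M.mulVec ξ = 0 ∧
        ∀ j, house (ξ j : K) ≤ c₀ * (c₀ * Fintype.card γ * A) ^
          ((Fintype.card ρ : ℝ) / (Fintype.card γ - Fintype.card ρ)) :=
    ⟨_, fun ρ γ _ _ M hM hρ hργ A hA =>
      house.exists_ne_zero_int_vec_house_le K M hM hρ hργ rfl hA rfl⟩
  filter_upwards [eventually_ge_atTop 1, eventually_ge_atTop |c₀|] with c hc1 hcc₀
  intro ρ γ _ _ M A hM hργ hA1 hA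
  have hρ : 0 < Fintype.card ρ := by
    by_contra! h
    have := Fintype.card_eq_zero_iff.1 (Nat.le_zero.1 h)
    exact hM (Subsingleton.elim _ _)
  obtain ⟨ξ, hξ0, hMξ, hξ⟩ := hc₀ ρ γ M hM hρ (by omega) A hA
  refine ⟨ξ, hξ0, hMξ, fun j => (hξ j).trans ?_⟩
  have hρ' : (1 : ℝ) ≤ Fintype.card ρ := mod_cast hρ
  have hργ' : 2 * (Fintype.card ρ : ℝ) ≤ Fintype.card γ := mod_cast hργ
  set e : ℝ := (Fintype.card ρ : ℝ) / (Fintype.card γ - Fintype.card ρ)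
  have he0 : 0 ≤ e := div_nonneg (by linarith) (by linarith)
  have he1 : e ≤ 1 := (div_le_one (by linarith)).2 (by linarith)
  have hbase : 1 ≤ c * Fintype.card γ * A :=
    one_le_mul_of_one_le_of_one_le (one_le_mul_of_one_le_of_one_le hc1 (by linarith)) hA1
  have habs : |c₀ * Fintype.card γ * A| ≤ c * Fintype.card γ * A := by
    rw [abs_mul, abs_mul, Nat.abs_cast, abs_of_nonneg (by linarith : 0 ≤ A)]
    gcongr
  calc c₀ * (c₀ * Fintype.card γ * A) ^ e
      ≤ |c₀| * |(c₀ * Fintype.card γ * A) ^ e| := by rw [← abs_mul]; exact le_abs_self _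
    _ ≤ |c₀| * |c₀ * Fintype.card γ * A| ^ e := by gcongr; exact Real.abs_rpow_le_abs_rpow _ _
    _ ≤ c * (c * Fintype.card γ * A) ^ e := by gcongr
    _ ≤ c * (c * Fintype.card γ * A) := by
      gcongr
      exact (Real.rpow_le_rpow_of_exponent_le hbase he1).trans_eq (Real.rpow_one _)

theorem eventually_exists_sum_mul_eq_zero (K : Type u) [Field K] [NumberField K] :
    ∀ᶠ c : ℝ in atTop, ∀ (ρ γ : Type u) [Fintype ρ] [Fintype γ] (M : Matrix ρ γ K) (A : ℝ),
      M ≠ 0 → (∀ i j, IsIntegral ℤ (M i j)) → 2 * Fintype.card ρ ≤ Fintype.card γ → 1 ≤ A →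
      (∀ i j, house (M i j) ≤ A) → ∃ ξ : γ → 𝓞 K, ξ ≠ 0 ∧ (∀ i, ∑ j, M i j * ξ j = 0) ∧
        ∀ j, house (ξ j : K) ≤ c * (c * Fintype.card γ * A) := by
  filter_upwards [eventually_exists_mulVec_eq_zero K] with c hc ρ γ _ _ M A hM0 hM hργ hA1 hA
  obtain ⟨N, hN⟩ : ∃ N : Matrix ρ γ (𝓞 K), ∀ i j, (N i j : K) = M i j :=
    ⟨fun i j => ⟨M i j, hM i j⟩, fun _ _ => rfl⟩
  have hN0 : N ≠ 0 := fun h => hM0 <| by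
    ext i j
    rw [← hN, h, Matrix.zero_apply, Matrix.zero_apply, RingOfIntegers.coe_eq_zero_iff]
  obtain ⟨ξ, hξ0, hNξ, hξ⟩ := hc ρ γ N A hN0 hργ hA1 fun i j => by simpa only [hN] using hA i j
  refine ⟨ξ, hξ0, fun i => ?_, hξ⟩
  have hrow : ∑ j, N i j * ξ j = 0 := congrFun hNξ i
  simpa only [map_sum, map_mul, map_zero, hN] using congrArg (algebraMap (𝓞 K) K) hrow

theorem exists_natCast_mul_isIntegral (s : Finset K) :
    ∃ d : ℕ, d ≠ 0 ∧ ∀ x ∈ s, IsIntegral ℤ (d * x) := by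
  obtain ⟨y, hy0, hy⟩ := exists_integral_multiples ℤ ℚ s
  refine ⟨y.natAbs, Int.natAbs_ne_zero.2 hy0, fun x hx => ?_⟩
  have hyx := hy x hx
  rw [zsmul_eq_mul] at hyx
  rw [Nat.cast_natAbs]
  obtain h | h := abs_choice y
  · rwa [h]
  · rw [h, Int.cast_neg, neg_mul]
    exact hyx.neg

end House

section PowMulZpow

variable {K : Type*} [Field K] {x : K} {d : ℕ}

theorem isIntegral_pow_mul_pow (hx : IsIntegral ℤ (d * x)) {j B : ℕ} (hj : j ≤ B) :
    IsIntegral ℤ (d ^ B * x ^ j) := by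
  obtain ⟨r, rfl⟩ := Nat.exists_eq_add_of_le hj
  rw [show (d : K) ^ (j + r) * x ^ j = (d * x) ^ j * d ^ r by ring]
  exact (hx.pow j).mul ((isIntegral_natCast d).pow r)

theorem isIntegral_pow_mul_zpow (hx : IsIntegral ℤ (d * x)) (hx' : IsIntegral ℤ (d * x⁻¹)) {k : ℤ}
    {B : ℕ} (hk : k.natAbs ≤ B) : IsIntegral ℤ (d ^ B * x ^ k) := by
  obtain hk' | hk' := k.natAbs_eq <;> rw [hk']
  · rw [zpow_natCast]
    exact isIntegral_pow_mul_pow hx hk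
  · rw [zpow_neg, zpow_natCast, ← inv_pow]
    exact isIntegral_pow_mul_pow hx' hk

variable [NumberField K] {h : ℝ}

theorem house_pow_mul_pow_le (hd : d ≤ h) (hx : house (d * x) ≤ h) {j B : ℕ} (hj : j ≤ B) :
    house (d ^ B * x ^ j) ≤ h ^ B := by
  obtain ⟨r, rfl⟩ := Nat.exists_eq_add_of_le hj
  rw [show (d : K) ^ (j + r) * x ^ j = (d * x) ^ j * d ^ r by ring, pow_add]
  exact house_mul_le_mul (house_pow_le_pow hx j)
    (house_pow_le_pow ((house_natCast d).trans_le hd) r)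

theorem house_pow_mul_zpow_le (hd : d ≤ h) (hx : house (d * x) ≤ h) (hx' : house (d * x⁻¹) ≤ h)
    {k : ℤ} {B : ℕ} (hk : k.natAbs ≤ B) : house (d ^ B * x ^ k) ≤ h ^ B := by
  obtain hk' | hk' := k.natAbs_eq <;> rw [hk']
  · rw [zpow_natCast]
    exact house_pow_mul_pow_le hd hx hk
  · rw [zpow_neg, zpow_natCast, ← inv_pow]
    exact house_pow_mul_pow_le hd hx' hk

end PowMulZpow

/-! ### Lattice points in the ring of integers -/

section LatticePoint

variable {K : Type u} [Field K] [NumberField K]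

/-- The index type of the integral basis `RingOfIntegers.basis K`. -/
abbrev IntegralBasisIndex (K : Type u) [Field K] [NumberField K] : Type u :=
  Module.Free.ChooseBasisIndex ℤ (𝓞 K)

/-- The algebraic integer with natural number coordinates `s` in the integral basis. -/
noncomputable def latticePoint (s : IntegralBasisIndex K → ℕ) : 𝓞 K :=
  ∑ i, s i • RingOfIntegers.basis K i

theorem latticePoint_injective : Function.Injective (latticePoint (K := K)) := by
  intro s t hst
  have hcoord : ∀ u : IntegralBasisIndex K → ℕ,
      ⇑((RingOfIntegers.basis K).repr (latticePoint u)) = fun i => (u i : ℤ) := fun u => by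
    simp only [latticePoint, ← natCast_zsmul]
    exact Module.Basis.repr_sum_self _ _
  have hrepr := congrArg (fun x => ⇑((RingOfIntegers.basis K).repr x)) hst
  simp only [hcoord] at hrepr
  exact funext fun i => mod_cast congrFun hrepr i

theorem map_mul_latticePoint {A : Type*} [AddCommMonoid A] (g : 𝓞 K →+ A) (x : 𝓞 K)
    (s : IntegralBasisIndex K → ℕ) :
    g (x * latticePoint s) = ∑ i, s i • g (x * RingOfIntegers.basis K i) := by
  simp only [latticePoint, mul_sum, mul_smul_comm, map_sum, map_nsmul]

variable {V : Type*} [SeminormedAddCommGroup V]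

theorem norm_map_latticePoint_le (g : 𝓞 K →+ V) {s : IntegralBasisIndex K → ℕ} {N : ℕ}
    (hs : ∀ i, s i ≤ N) :
    ‖g (latticePoint s)‖ ≤ (∑ i, ‖g (RingOfIntegers.basis K i)‖) * N := by
  rw [latticePoint, map_sum, sum_mul]
  refine norm_sum_le_of_le _ fun i _ => ?_
  rw [map_nsmul, mul_comm]
  refine (norm_nsmul_le).trans ?_
  gcongr
  exact hs i

theorem eventually_norm_map_latticePoint_le (g : 𝓞 K →+ V) :
    ∀ᶠ c : ℝ in atTop, ∀ (N : ℕ) (s : IntegralBasisIndex K → ℕ), (∀ i, s i ≤ N) →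
      ‖g (latticePoint s)‖ ≤ c * N := by
  filter_upwards [eventually_ge_atTop (∑ i, ‖g (RingOfIntegers.basis K i)‖)] with c hc N s hs
  exact (norm_map_latticePoint_le g hs).trans (by gcongr)

theorem eventually_house_latticePoint_le (K : Type u) [Field K] [NumberField K] :
    ∀ᶠ c : ℝ in atTop, ∀ (N : ℕ) (s : IntegralBasisIndex K → ℕ), (∀ i, s i ≤ N) →
      house (latticePoint s : K) ≤ c * N :=
  eventually_norm_map_latticePoint_le
    ((canonicalEmbedding K).comp (algebraMap (𝓞 K) K)).toAddMonoidHom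

theorem eventually_norm_map_latticePoint_mul_le (g : 𝓞 K →+ V) :
    ∀ᶠ c : ℝ in atTop, ∀ (L S : ℕ) (l s : IntegralBasisIndex K → ℕ), (∀ i, l i ≤ L) →
      (∀ i, s i ≤ S) → ‖g (latticePoint l * latticePoint s)‖ ≤ c * (L * S) := by
  have hbasis : ∀ i, ∀ᶠ c : ℝ in atTop, ∀ (L : ℕ) (l : IntegralBasisIndex K → ℕ), (∀ i, l i ≤ L) →
      ‖g (latticePoint l * RingOfIntegers.basis K i)‖ ≤ c * L := fun i =>
    eventually_norm_map_latticePoint_le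
      (g.comp (AddMonoidHom.mulRight (RingOfIntegers.basis K i)))
  obtain ⟨c₀, hc₀⟩ := (eventually_all.2 hbasis).exists
  filter_upwards [eventually_ge_atTop (Fintype.card (IntegralBasisIndex K) * c₀)]
    with c hc L S l s hl hs
  calc ‖g (latticePoint l * latticePoint s)‖
      ≤ (∑ i, ‖g (latticePoint l * RingOfIntegers.basis K i)‖) * S :=
        norm_map_latticePoint_le (g.comp (AddMonoidHom.mulLeft (latticePoint l))) hs
    _ ≤ (∑ _i : IntegralBasisIndex K, c₀ * L) * S := by
        gcongr with i
        exact hc₀ i L l hl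
    _ = Fintype.card (IntegralBasisIndex K) * c₀ * (L * S) := by
        rw [sum_const, card_univ, nsmul_eq_mul]
        ring
    _ ≤ c * (L * S) := by gcongr

end LatticePoint

/-! ### Linear forms in logarithms and their conjugates -/

section LinearForm

variable {K : Type u} [Field K] {ι : Type*} [Fintype ι]

/-- The additive map `x ↦ ∑ b, Tr(x * β b) * ℓ b`. If `ℓ b` is a logarithm of `α b`, then
`traceExponent β ℓ x` is a logarithm of the algebraic number `traceMonomial α β x`. -/
noncomputable def traceExponent (β : ι → 𝓞 K) (ℓ : ι → ℂ) : 𝓞 K →+ ℂ where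
  toFun x := ∑ b, (Algebra.trace ℤ (𝓞 K) (x * β b) : ℂ) * ℓ b
  map_zero' := by simp only [zero_mul, map_zero, Int.cast_zero, sum_const_zero]
  map_add' x y := by simp only [add_mul, map_add, Int.cast_add, sum_add_distrib]

/-- The monomial in the numbers `α b` with exponents `Tr(x * β b)`. -/
noncomputable def traceMonomial (α : ι → K) (β : ι → 𝓞 K) (x : 𝓞 K) : K :=
  ∏ b, α b ^ Algebra.trace ℤ (𝓞 K) (x * β b)

variable {φ : K →+* ℂ} {α : ι → K} {β : ι → 𝓞 K} {ℓ : ι → ℂ}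

theorem map_traceMonomial (hαℓ : ∀ b, φ (α b) = Complex.exp (ℓ b)) (x : 𝓞 K) :
    φ (traceMonomial α β x) = Complex.exp (traceExponent β ℓ x) := by
  change _ = Complex.exp (∑ b, (Algebra.trace ℤ (𝓞 K) (x * β b) : ℂ) * ℓ b)
  simp only [traceMonomial, map_prod, map_zpow₀, hαℓ, Complex.exp_sum, Complex.exp_int_mul]

theorem traceMonomial_zero : traceMonomial α β 0 = 1 := by
  simp only [traceMonomial, zero_mul, map_zero, zpow_zero, prod_const_one]

theorem traceMonomial_ne_zero (hα : ∀ b, α b ≠ 0) (x : 𝓞 K) : traceMonomial α β x ≠ 0 :=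
  prod_ne_zero_iff.2 fun b _ => zpow_ne_zero _ (hα b)

variable [NumberField K]

/-- The conjugate under `σ` of the linear form `∑ b, β b * ℓ b` in the complex numbers `ℓ b`, the
number field being embedded into `ℂ` by `φ`. -/
noncomputable def conjForm (φ : K →+* ℂ) (β : ι → 𝓞 K) (ℓ : ι → ℂ) (σ : K ≃ₐ[ℚ] K) : ℂ :=
  ∑ b, φ (σ (β b)) * ℓ b

theorem intCast_trace_eq_sum_automorphisms [IsGalois ℚ K] (φ : K →+* ℂ) (x : 𝓞 K) :
    (Algebra.trace ℤ (𝓞 K) x : ℂ) = ∑ σ : K ≃ₐ[ℚ] K, φ (σ x) := by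
  have hsum := congrArg φ (trace_eq_sum_automorphisms (K := ℚ) (x : K))
  rw [← Algebra.coe_trace_int] at hsum
  simpa only [map_intCast, map_sum] using hsum

theorem traceExponent_eq_sum [IsGalois ℚ K] (φ : K →+* ℂ) (β : ι → 𝓞 K) (ℓ : ι → ℂ) (x : 𝓞 K) :
    traceExponent β ℓ x = ∑ σ : K ≃ₐ[ℚ] K, φ (σ x) * conjForm φ β ℓ σ := by
  change ∑ b, (Algebra.trace ℤ (𝓞 K) (x * β b) : ℂ) * ℓ b = _
  simp only [intCast_trace_eq_sum_automorphisms φ, conjForm, mul_sum, sum_mul]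
  rw [sum_comm]
  refine sum_congr rfl fun σ _ => sum_congr rfl fun b _ => ?_
  push_cast
  rw [map_mul, map_mul, mul_assoc]

theorem exists_dual_integralBasis (φ : K →+* ℂ) (σ : K ≃ₐ[ℚ] K) :
    ∃ c : IntegralBasisIndex K → ℂ, ∑ i, c i * φ (σ (RingOfIntegers.basis K i)) = 1 ∧
      ∀ τ : K ≃ₐ[ℚ] K, τ ≠ σ → ∑ i, c i * φ (τ (RingOfIntegers.basis K i)) = 0 := by
  classical
  set c := (canonicalEmbedding.latticeBasis K).repr (Pi.single (φ.comp (σ : K →+* K)) 1)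
  have hc : ∀ τ : K ≃ₐ[ℚ] K, ∑ i, c i * φ (τ (RingOfIntegers.basis K i)) =
      (Pi.single (φ.comp (σ : K →+* K)) 1 : (K →+* ℂ) → ℂ) (φ.comp (τ : K →+* K)) := fun τ => by
    rw [← (canonicalEmbedding.latticeBasis K).sum_repr (Pi.single (φ.comp (σ : K →+* K)) 1)]
    simp only [Finset.sum_apply, Pi.smul_apply, canonicalEmbedding.latticeBasis_apply,
      canonicalEmbedding.apply_at, integralBasis_apply, smul_eq_mul]
    rfl
  refine ⟨c, (hc σ).trans (Pi.single_eq_same _ _), fun τ hτ => (hc τ).trans ?_⟩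
  refine Pi.single_eq_of_ne (fun h => hτ ?_) _
  ext x
  exact φ.injective (DFunLike.congr_fun h x)

theorem exists_map_eq_sum_traceExponent [IsGalois ℚ K] {σ : K ≃ₐ[ℚ] K}
    (hσ : conjForm φ β ℓ σ ≠ 0) :
    ∃ c : IntegralBasisIndex K → ℂ, ∀ y : 𝓞 K,
      φ (σ y) = ∑ i, c i * traceExponent β ℓ (y * RingOfIntegers.basis K i) := by
  classical
  obtain ⟨c, hcσ, hc⟩ := exists_dual_integralBasis φ σ
  refine ⟨fun i => c i / conjForm φ β ℓ σ, fun y => ?_⟩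
  have hsum : ∑ i, c i * traceExponent β ℓ (y * RingOfIntegers.basis K i) =
      ∑ τ : K ≃ₐ[ℚ] K, φ (τ y) * conjForm φ β ℓ τ *
        ∑ i, c i * φ (τ (RingOfIntegers.basis K i)) := by
    simp only [traceExponent_eq_sum φ, mul_sum]
    rw [sum_comm]
    refine sum_congr rfl fun τ _ => sum_congr rfl fun i _ => ?_
    push_cast
    rw [map_mul, map_mul]
    ring
  simp only [div_mul_eq_mul_div, ← sum_div, hsum]
  rw [sum_eq_single σ (fun τ _ hτ => by rw [hc τ hτ, mul_zero]) (by simp), hcσ, mul_one,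
    mul_div_cancel_right₀ _ hσ]

theorem eventually_exists_sum_norm_le [IsGalois ℚ K] (φ : K →+* ℂ) (β : ι → 𝓞 K) (ℓ : ι → ℂ) :
    ∀ᶠ C : ℝ in atTop, ∀ σ : K ≃ₐ[ℚ] K, conjForm φ β ℓ σ ≠ 0 →
      ∃ c : IntegralBasisIndex K → ℂ, ∑ i, ‖c i‖ ≤ C ∧ ∀ y : 𝓞 K,
        φ (σ y) = ∑ i, c i * traceExponent β ℓ (y * RingOfIntegers.basis K i) := by
  refine eventually_all.2 fun σ => ?_
  by_cases hσ : conjForm φ β ℓ σ = 0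
  · exact Eventually.of_forall fun C hσ' => absurd hσ hσ'
  · obtain ⟨c, hc⟩ := exists_map_eq_sum_traceExponent hσ
    filter_upwards [eventually_ge_atTop (∑ i, ‖c i‖)] with C hC _
    exact ⟨c, hC, hc⟩

theorem eventually_norm_traceExponent_le (β : ι → 𝓞 K) (ℓ : ι → ℂ) :
    ∀ᶠ c : ℝ in atTop, ∀ (i : IntegralBasisIndex K) (N : ℕ) (l : IntegralBasisIndex K → ℕ),
      (∀ i, l i ≤ N) →
        ‖traceExponent β ℓ (latticePoint l * RingOfIntegers.basis K i)‖ ≤ c * N :=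
  eventually_all.2 fun i => eventually_norm_map_latticePoint_le
    ((traceExponent β ℓ).comp (AddMonoidHom.mulRight (RingOfIntegers.basis K i)))

theorem exists_natAbs_trace_le {ι : Type*} [Finite ι] (β : ι → 𝓞 K) :
    ∃ N : ℕ, ∀ (b : ι) (L S : ℕ) (l s : IntegralBasisIndex K → ℕ), (∀ i, l i ≤ L) →
      (∀ i, s i ≤ S) →
        (Algebra.trace ℤ (𝓞 K) (latticePoint l * latticePoint s * β b)).natAbs ≤ N * (L * S) := by
  have htrace := eventually_all.2 fun b => eventually_norm_map_latticePoint_mul_le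
    ((Algebra.trace ℤ (𝓞 K)).toAddMonoidHom.comp (AddMonoidHom.mulRight (β b)))
  obtain ⟨N, hN⟩ := (tendsto_natCast_atTop_atTop.eventually htrace).exists
  refine ⟨N, fun b L S l s hl hs => ?_⟩
  have hb := hN b L S l s hl hs
  rw [Int.norm_eq_abs] at hb
  rw [← Nat.cast_le (α := ℝ), Nat.cast_natAbs, Int.cast_abs]
  exact_mod_cast hb

theorem eventually_exists_natCast_mul_traceMonomial (α : ι → K) (β : ι → 𝓞 K) :
    ∀ᶠ c : ℝ in atTop, ∀ L S : ℕ, ∃ D : ℕ, D ≠ 0 ∧ D ≤ c ^ (L * S) ∧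
      ∀ l s : IntegralBasisIndex K → ℕ, (∀ i, l i ≤ L) → (∀ i, s i ≤ S) →
        IsIntegral ℤ (D * traceMonomial α β (latticePoint l * latticePoint s)) ∧
        house (D * traceMonomial α β (latticePoint l * latticePoint s)) ≤ c ^ (L * S) := by
  classical
  obtain ⟨d, hd0, hd⟩ := exists_natCast_mul_isIntegral (univ.image α ∪ univ.image fun b => (α b)⁻¹)
  have hα : ∀ b, IsIntegral ℤ (d * α b) := fun b => hd _ (by simp)
  have hα' : ∀ b, IsIntegral ℤ (d * (α b)⁻¹) := fun b => hd _ (by simp)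
  obtain ⟨N, hN⟩ := exists_natAbs_trace_le β
  obtain ⟨h, hdh, hh, hh'⟩ : ∃ h : ℝ, d ≤ h ∧ (∀ b, house (d * α b) ≤ h) ∧
      ∀ b, house (d * (α b)⁻¹) ≤ h :=
    ((eventually_ge_atTop (d : ℝ)).and ((eventually_all.2 fun b => eventually_ge_atTop _).and
      (eventually_all.2 fun b => eventually_ge_atTop _))).exists
  have hh0 : 0 ≤ h := (Nat.cast_nonneg d).trans hdh
  filter_upwards [eventually_ge_atTop (h ^ (N * Fintype.card ι))] with c hc L S
  have hpow : (h ^ (N * (L * S))) ^ Fintype.card ι ≤ c ^ (L * S) := by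
    rw [← pow_mul, mul_right_comm, pow_mul]
    gcongr
  refine ⟨(d ^ (N * (L * S))) ^ Fintype.card ι, pow_ne_zero _ (pow_ne_zero _ hd0), ?_,
    fun l s hl hs => ?_⟩
  · push_cast
    exact le_trans (by gcongr) hpow
  · have hprod : (((d ^ (N * (L * S))) ^ Fintype.card ι : ℕ) : K) *
        traceMonomial α β (latticePoint l * latticePoint s) =
        ∏ b, (d : K) ^ (N * (L * S)) *
          α b ^ Algebra.trace ℤ (𝓞 K) (latticePoint l * latticePoint s * β b) := by
      rw [prod_mul_distrib, prod_const, card_univ, traceMonomial]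
      push_cast
      rfl
    rw [hprod]
    exact ⟨IsIntegral.prod _ fun b _ =>
        isIntegral_pow_mul_zpow (hα b) (hα' b) (hN b L S l s hl hs),
      (house_prod_le_pow fun b =>
        house_pow_mul_zpow_le hdh (hh b) (hh' b) (hN b L S l s hl hs)).trans hpow⟩

end LinearForm

/-! ### Baker's method -/

/-- The order of vanishing `Y` is large compared with the degree `n` of the field, the height bound
`c`, the number `S` of interpolation points and the degree `L` of the auxiliary function. The last
field says that the gain from Schwarz's lemma beats all the other contributions, which are bounded
by powers of `Y ^ Y`. -/
structure IsLargeOrder (n e : ℕ) (c : ℝ) (S L Y : ℕ) : Prop where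
  two_le : 2 ≤ Y
  exp_le : Real.exp (n * c) ≤ Y
  mul_le : L * S ≤ Y
  two_mul_le_div : 2 * (S : ℝ) ≤ Y / L
  schwarz_le : ∀ k, Y ≤ n * k → (2 * S / (Y / L) : ℝ) ^ (S * k) ≤ (((Y : ℝ) ^ Y) ^ e)⁻¹

theorem pow_two_mul_mul_le_one {S X n Y : ℕ} (hn : n ≠ 0) (hS : S ≠ 0)
    (hSX : (4 * S ^ 2) ^ (2 * n) ≤ X) (hXY : X ^ n ≤ Y) :
    (2 * S / (Y / (2 * S * X ^ (n - 1) : ℕ)) : ℝ) ^ (2 * n) * Y ≤ 1 := by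
  obtain ⟨k, rfl⟩ := Nat.exists_eq_succ_of_ne_zero hn
  have hX : X ≠ 0 := (lt_of_lt_of_le (by positivity) hSX).ne'
  have hXY' : X ≤ Y := (le_self_pow₀ (Nat.one_le_iff_ne_zero.2 hX) hn).trans hXY
  have hY : (0 : ℝ) < Y := mod_cast (Nat.pos_of_ne_zero hX).trans_le hXY'
  have hbase : (2 * S / (Y / (2 * S * X ^ (k + 1 - 1) : ℕ)) : ℝ) = 4 * S ^ 2 * X ^ k / Y := by
    push_cast
    field_simp
    norm_num
  rw [hbase, div_pow, div_mul_eq_mul_div, div_le_one (by positivity), mul_pow]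
  calc ((4 * S ^ 2 : ℝ) ^ (2 * (k + 1))) * ((X : ℝ) ^ k) ^ (2 * (k + 1)) * Y
      = ((4 * S ^ 2 : ℝ) ^ (2 * (k + 1))) * ((X : ℝ) ^ (k + 1)) ^ (2 * k) * Y := by
        rw [← pow_mul, ← pow_mul]
        ring_nf
    _ ≤ Y * Y ^ (2 * k) * Y := by
        gcongr
        · exact_mod_cast hSX.trans hXY'
        · exact_mod_cast hXY
    _ = (Y : ℝ) ^ (2 * (k + 1)) := by ring

theorem pow_le_inv_pow_pow {t : ℝ} {n e k Y : ℕ} (ht0 : 0 ≤ t) (ht1 : t ≤ 1) (hY : Y ≠ 0)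
    (ht : t ^ (2 * n) * Y ≤ 1) (hk : Y ≤ n * k) :
    t ^ (2 * n ^ 2 * e * k) ≤ (((Y : ℝ) ^ Y) ^ e)⁻¹ := by
  have hexp : 2 * n * (e * Y) ≤ 2 * n ^ 2 * e * k :=
    calc 2 * n * (e * Y) ≤ 2 * n * (e * (n * k)) := by gcongr
      _ = 2 * n ^ 2 * e * k := by ring
  rw [← one_div, le_div_iff₀ (by positivity)]
  calc t ^ (2 * n ^ 2 * e * k) * ((Y : ℝ) ^ Y) ^ e ≤ t ^ (2 * n * (e * Y)) * ((Y : ℝ) ^ Y) ^ e := by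
        gcongr ?_ * _
        exact pow_le_pow_of_le_one ht0 ht1 hexp
    _ = (t ^ (2 * n) * Y) ^ (e * Y) := by rw [mul_pow, ← pow_mul, ← pow_mul, mul_comm Y e]
    _ ≤ 1 := pow_le_one₀ (by positivity) ht

theorem exists_forall_isLargeOrder {n m e : ℕ} (hmn : m < n) (he : e ≠ 0) (c : ℝ) :
    ∃ S T L : ℕ, S ≠ 0 ∧ T ≠ 0 ∧ L ≠ 0 ∧ 2 * (T ^ m * S ^ n) ≤ L ^ n ∧
      ∀ Y, T ≤ Y → IsLargeOrder n e c S L Y := by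
  have hn : n ≠ 0 := by omega
  obtain ⟨S, hS⟩ : ∃ S : ℕ, S = 2 * n ^ 2 * e := ⟨_, rfl⟩
  have hS0 : S ≠ 0 := by rw [hS]; positivity
  obtain ⟨X, hcX, hSX, hSX', hX2⟩ : ∃ X : ℕ, Real.exp (n * c) ≤ X ∧ 4 * S ^ 2 ≤ X ∧
      (4 * S ^ 2) ^ (2 * n) ≤ X ∧ 2 ≤ X :=
    ((tendsto_natCast_atTop_atTop.eventually (eventually_ge_atTop _)).and
      ((eventually_ge_atTop _).and ((eventually_ge_atTop _).and (eventually_ge_atTop _)))).exists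
  have hX0 : X ≠ 0 := by omega
  refine ⟨S, X ^ n, 2 * S * X ^ (n - 1), hS0, by positivity, by positivity, ?_, fun Y hY => ?_⟩
  · calc 2 * ((X ^ n) ^ m * S ^ n) ≤ 2 ^ n * ((X ^ n) ^ (n - 1) * S ^ n) := by
          gcongr
          · exact le_self_pow₀ one_le_two hn
          · exact Nat.one_le_pow _ _ (Nat.pos_of_ne_zero hX0)
          · omega
      _ = (2 * S * X ^ (n - 1)) ^ n := by rw [← pow_mul, mul_pow, mul_pow, ← pow_mul]; ring
  · have hXY : X ≤ Y := (le_self_pow₀ (by omega) hn).trans hY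
    have hLS : 4 * S ^ 2 * X ^ (n - 1) ≤ Y :=
      calc 4 * S ^ 2 * X ^ (n - 1) ≤ X * X ^ (n - 1) := by gcongr
        _ = X ^ n := mul_pow_sub_one hn X
        _ ≤ Y := hY
    have hSL : 2 * (S : ℝ) ≤ Y / (2 * S * X ^ (n - 1) : ℕ) := by
      rw [le_div_iff₀ (by positivity)]
      exact_mod_cast (show 2 * S * (2 * S * X ^ (n - 1)) ≤ Y by linarith)
    refine ⟨by omega, hcX.trans (mod_cast hXY), by nlinarith, hSL, fun k hk => ?_⟩
    have hgain := pow_le_inv_pow_pow (e := e) (by positivity)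
      (div_le_one_of_le₀ hSL (by positivity)) (by omega)
      (pow_two_mul_mul_le_one hn hS0 hSX' hY) hk
    rwa [← hS] at hgain

namespace IsLargeOrder

variable {n e S L Y : ℕ} {c : ℝ}

theorem one_lt_pow (h : IsLargeOrder n e c S L Y) : (1 : ℝ) < (Y : ℝ) ^ Y :=
  one_lt_pow₀ (mod_cast h.two_le) (by linarith [h.two_le])

theorem self_le_pow (h : IsLargeOrder n e c S L Y) : (Y : ℝ) ≤ (Y : ℝ) ^ Y :=
  le_self_pow₀ (mod_cast one_le_two.trans h.two_le) (by linarith [h.two_le])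

theorem pow_mul_le_pow (h : IsLargeOrder n e c S L Y) {x : ℝ} (hx0 : 0 ≤ x) (hx : x ≤ Y) :
    x ^ (L * S) ≤ (Y : ℝ) ^ Y :=
  (pow_le_pow_left₀ hx0 hx _).trans
    (pow_le_pow_right₀ (mod_cast one_le_two.trans h.two_le) h.mul_le)

theorem degree_le (h : IsLargeOrder n e c S L Y) (hS : S ≠ 0) : L ≤ Y :=
  (Nat.le_mul_of_pos_right L (Nat.pos_of_ne_zero hS)).trans h.mul_le

theorem exp_le_self (h : IsLargeOrder n e c S L Y) (hn : n ≠ 0) (hc : 0 ≤ c) : Real.exp c ≤ Y :=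
  (Real.exp_le_exp.2 (le_mul_of_one_le_left hc (mod_cast Nat.one_le_iff_ne_zero.2 hn))).trans
    h.exp_le

theorem le_self (h : IsLargeOrder n e c S L Y) (hn : n ≠ 0) (hc : 0 ≤ c) : c ≤ Y := by
  linarith [h.exp_le_self hn hc, Real.add_one_le_exp c]

theorem mul_pow_le (h : IsLargeOrder n e c S L Y) (hn : n ≠ 0) (hS : S ≠ 0) (hc : 0 ≤ c) :
    (c * L) ^ Y ≤ ((Y : ℝ) ^ Y) ^ 2 := by
  calc (c * L) ^ Y ≤ (Y * Y : ℝ) ^ Y := by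
        gcongr
        · exact h.le_self hn hc
        · exact h.degree_le hS
    _ = ((Y : ℝ) ^ Y) ^ 2 := by rw [← sq, ← pow_mul, ← pow_mul, mul_comm]

theorem exp_mul_le (h : IsLargeOrder n e c S L Y) :
    Real.exp (n * (S * (c * L))) ≤ (Y : ℝ) ^ Y := by
  rw [show (n : ℝ) * (S * (c * L)) = ((L * S : ℕ) : ℝ) * (n * c) by push_cast; ring,
    Real.exp_nat_mul]
  exact h.pow_mul_le_pow (Real.exp_pos _).le h.exp_le

theorem exp_mul_div_le (h : IsLargeOrder n e c S L Y) (hn : n ≠ 0) (hc : 0 ≤ c) (hL : L ≠ 0) :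
    Real.exp (c * L * (Y / L)) ≤ (Y : ℝ) ^ Y := by
  rw [mul_assoc, mul_div_cancel₀ _ (Nat.cast_ne_zero.2 hL), mul_comm c, Real.exp_nat_mul]
  exact pow_le_pow_left₀ (Real.exp_pos _).le (h.exp_le_self hn hc) Y

end IsLargeOrder

theorem eq_zero_of_forall_sum_mul_pow_eq_zero {R Λ : Type*} [CommRing R] [IsDomain R] [Fintype Λ]
    {f v : Λ → R} (hf : Function.Injective f) (hv : ∀ k : ℕ, ∑ l, v l * f l ^ k = 0) : v = 0 := by
  set e := Fintype.equivFin Λ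
  have hve : v ∘ e.symm = 0 :=
    Matrix.eq_zero_of_forall_pow_sum_mul_pow_eq_zero (hf.comp e.symm.injective) fun k =>
      (Equiv.sum_comp e.symm fun l => v l * f l ^ (k : ℕ)).trans (hv k)
  rw [← Equiv.eq_comp_symm] at hve
  exact funext fun l => by simpa using congrFun hve l

section AuxiliaryFunction

variable {K : Type u} [Field K] [NumberField K] {ι : Type*} [Fintype ι] {J : Type u}
  {φ : K →+* ℂ} {α : ι → K} {β : ι → 𝓞 K} {ℓ : ι → ℂ} {c : ℝ} {L : ℕ}

/-- `c` bounds all the constants that depend only on the linear form: those of Siegel's lemma, of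
the heights of lattice points and monomials, and of the two changes of coordinates between the
conjugates of `y` and the exponents `traceExponent β ℓ (y * ω i)`, for the integral basis `ω`. -/
structure IsHeightBound (φ : K →+* ℂ) (α : ι → K) (β : ι → 𝓞 K) (ℓ : ι → ℂ) (c : ℝ) : Prop where
  one_le : 1 ≤ c
  siegel : ∀ (ρ γ : Type u) [Fintype ρ] [Fintype γ] (M : Matrix ρ γ K) (A : ℝ), M ≠ 0 →
    (∀ i j, IsIntegral ℤ (M i j)) → 2 * Fintype.card ρ ≤ Fintype.card γ → 1 ≤ A →
    (∀ i j, house (M i j) ≤ A) → ∃ ξ : γ → 𝓞 K, ξ ≠ 0 ∧ (∀ i, ∑ j, M i j * ξ j = 0) ∧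
      ∀ j, house (ξ j : K) ≤ c * (c * Fintype.card γ * A)
  house_latticePoint_le : ∀ (N : ℕ) (s : IntegralBasisIndex K → ℕ), (∀ i, s i ≤ N) →
    house (latticePoint s : K) ≤ c * N
  exists_denominator : ∀ L S : ℕ, ∃ D : ℕ, D ≠ 0 ∧ D ≤ c ^ (L * S) ∧
    ∀ l s : IntegralBasisIndex K → ℕ, (∀ i, l i ≤ L) → (∀ i, s i ≤ S) →
      IsIntegral ℤ (D * traceMonomial α β (latticePoint l * latticePoint s)) ∧
      house (D * traceMonomial α β (latticePoint l * latticePoint s)) ≤ c ^ (L * S)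
  norm_traceExponent_le : ∀ (i : IntegralBasisIndex K) (N : ℕ) (l : IntegralBasisIndex K → ℕ),
    (∀ i, l i ≤ N) → ‖traceExponent β ℓ (latticePoint l * RingOfIntegers.basis K i)‖ ≤ c * N
  exists_sum_norm_le : ∀ σ : K ≃ₐ[ℚ] K, conjForm φ β ℓ σ ≠ 0 →
    ∃ d : IntegralBasisIndex K → ℂ, ∑ i, ‖d i‖ ≤ c ∧ ∀ y : 𝓞 K,
      φ (σ y) = ∑ i, d i * traceExponent β ℓ (y * RingOfIntegers.basis K i)

theorem exists_isHeightBound [IsGalois ℚ K] (φ : K →+* ℂ) (α : ι → K) (β : ι → 𝓞 K)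
    (ℓ : ι → ℂ) : ∃ c, IsHeightBound φ α β ℓ c := by
  obtain ⟨c, hc⟩ := ((eventually_ge_atTop (1 : ℝ)).and <|
    (eventually_exists_sum_mul_eq_zero K).and <| (eventually_house_latticePoint_le K).and <|
    (eventually_exists_natCast_mul_traceMonomial α β).and <|
    (eventually_norm_traceExponent_le β ℓ).and (eventually_exists_sum_norm_le φ β ℓ)).exists
  exact ⟨c, hc.1, hc.2.1, hc.2.2.1, hc.2.2.2.1, hc.2.2.2.2.1, hc.2.2.2.2.2⟩

theorem card_integralBasisIndex (K : Type u) [Field K] [NumberField K] :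
    Fintype.card (IntegralBasisIndex K) = Module.finrank ℚ K := by
  rw [← Module.finrank_eq_card_chooseBasisIndex, RingOfIntegers.rank]

theorem card_integralBasisIndex_fun (K : Type u) [Field K] [NumberField K] (N : ℕ) :
    Fintype.card (IntegralBasisIndex K → Fin N) = N ^ Module.finrank ℚ K := by
  rw [Fintype.card_fun, Fintype.card_fin, card_integralBasisIndex]

/-- The lattice points with coordinates less than `L`. -/
noncomputable def boxPoint (l : IntegralBasisIndex K → Fin L) : 𝓞 K :=
  latticePoint fun i => (l i : ℕ)

theorem boxPoint_injective : Function.Injective (boxPoint (K := K) (L := L)) := fun _ _ h =>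
  funext fun i => Fin.ext (congrFun (latticePoint_injective h) i)

/-- The derivative along the directions `w` of the auxiliary function with coefficients `p`, at the
lattice point with coordinates `s`. It is an algebraic number, whose image in `ℂ` is a
`mixedExpSum`. -/
noncomputable def auxSum (α : ι → K) (β : ι → 𝓞 K) (τ : J → K ≃ₐ[ℚ] K)
    (p : (IntegralBasisIndex K → Fin L) → 𝓞 K) (w : Multiset J) (s : IntegralBasisIndex K → ℕ) :
    K :=
  ∑ l, p l * (w.map fun j => τ j (boxPoint l)).prod *
    traceMonomial α β (boxPoint l * latticePoint s)

variable {τ : J → K ≃ₐ[ℚ] K} {p : (IntegralBasisIndex K → Fin L) → 𝓞 K} {w : Multiset J}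
  {s : IntegralBasisIndex K → ℕ}

theorem map_auxSum (hαℓ : ∀ b, φ (α b) = Complex.exp (ℓ b)) :
    φ (auxSum α β τ p w s) = mixedExpSum (fun l => φ (p l))
      (fun l i => traceExponent β ℓ (boxPoint l * RingOfIntegers.basis K i))
      (fun l j => φ (τ j (boxPoint l))) w 0 s := by
  simp only [auxSum, mixedExpSum, map_sum, map_mul, map_multiset_prod, Multiset.map_map,
    Function.comp_def, map_traceMonomial hαℓ, map_mul_latticePoint, nsmul_eq_mul,
    Multiset.map_zero, Multiset.prod_zero, mul_one]

theorem eq_zero_of_forall_auxSum_eq_zero (j : J)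
    (h : ∀ k, auxSum α β τ p (Multiset.replicate k j) 0 = 0) : p = 0 := by
  have hzero : latticePoint (0 : IntegralBasisIndex K → ℕ) = 0 := by simp [latticePoint]
  have hp : (fun l => (p l : K)) = 0 := by
    refine eq_zero_of_forall_sum_mul_pow_eq_zero (f := fun l => τ j (boxPoint l)) ?_ fun k => ?_
    · exact (τ j).injective.comp (RingOfIntegers.coe_injective.comp boxPoint_injective)
    · simpa only [auxSum, hzero, mul_zero, traceMonomial_zero, mul_one, Multiset.map_replicate,
        Multiset.prod_replicate] using h k
  exact funext fun l => RingOfIntegers.coe_injective (congrFun hp l)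

/-- The coefficient of `p l` in `D * auxSum α β τ p w s`; the natural number `D` serves as a common
denominator. -/
noncomputable def auxCoeff (α : ι → K) (β : ι → 𝓞 K) (τ : J → K ≃ₐ[ℚ] K) (D : ℕ) (w : Multiset J)
    (s : IntegralBasisIndex K → ℕ) (l : IntegralBasisIndex K → Fin L) : K :=
  (w.map fun j => τ j (boxPoint l)).prod * (D * traceMonomial α β (boxPoint l * latticePoint s))

theorem natCast_mul_auxSum (D : ℕ) :
    D * auxSum α β τ p w s = ∑ l, auxCoeff α β τ D w s l * p l := by
  rw [auxSum, mul_sum]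
  refine sum_congr rfl fun l _ => ?_
  rw [auxCoeff]
  ring

variable {D : ℕ} {l : IntegralBasisIndex K → Fin L}

theorem isIntegral_auxCoeff
    (hD : IsIntegral ℤ (D * traceMonomial α β (boxPoint l * latticePoint s))) :
    IsIntegral ℤ (auxCoeff α β τ D w s l) := by
  refine (IsIntegral.multiset_prod fun x hx => ?_).mul hD
  obtain ⟨j, -, rfl⟩ := Multiset.mem_map.1 hx
  exact (boxPoint l).isIntegral_coe.map ((τ j).restrictScalars ℤ)

theorem house_auxCoeff_le {B B' : ℝ} (hB : house (boxPoint l : K) ≤ B)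
    (hD : house (D * traceMonomial α β (boxPoint l * latticePoint s)) ≤ B') :
    house (auxCoeff α β τ D w s l) ≤ B ^ w.card * B' :=
  house_mul_le_mul
    (house_multiset_prod_map_le (fun j => (house_algEquiv_le (τ j) _).trans hB) w) hD

theorem house_natCast_mul_auxSum_le {P B : ℝ} (hp : ∀ l, house (p l : K) ≤ P)
    (hB : ∀ l, house (auxCoeff α β τ D w s (L := L) l) ≤ B) :
    house (D * auxSum α β τ p w s) ≤ (L : ℝ) ^ Module.finrank ℚ K * (B * P) := by
  rw [natCast_mul_auxSum]
  calc house (∑ l, auxCoeff α β τ D w s l * p l)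
      ≤ ∑ _l : IntegralBasisIndex K → Fin L, B * P :=
        (house_sum_le_sum_house _ _).trans
          (sum_le_sum fun l _ => house_mul_le_mul (hB l) (hp l))
    _ = (L : ℝ) ^ Module.finrank ℚ K * (B * P) := by
        rw [sum_const, nsmul_eq_mul, card_univ, card_integralBasisIndex_fun, Nat.cast_pow]

theorem sum_replicate_count [DecidableEq J] [Fintype J] (w : Multiset J) :
    ∑ j, Multiset.replicate (w.count j) j = w := by
  ext i
  simp [Multiset.count_sum', Multiset.count_replicate]

theorem exists_auxSum_eq_zero [Fintype J] (τ : J → K ≃ₐ[ℚ] K) (hα : ∀ b, α b ≠ 0)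
    (hc : IsHeightBound φ α β ℓ c) {S T : ℕ} (hS : S ≠ 0) (hT : T ≠ 0) (hL : L ≠ 0)
    (hcard : 2 * (T ^ Fintype.card J * S ^ Module.finrank ℚ K) ≤ L ^ Module.finrank ℚ K) :
    ∃ p : (IntegralBasisIndex K → Fin L) → 𝓞 K, p ≠ 0 ∧
      (∀ l, house (p l : K) ≤ c * (c * (L : ℝ) ^ Module.finrank ℚ K *
        ((c * L) ^ (Fintype.card J * T) * c ^ (L * S)))) ∧
      ∀ w : Multiset J, w.card < T → ∀ s, (∀ i, s i < S) → auxSum α β τ p w s = 0 := by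
  classical
  have hcL : 1 ≤ c * L := one_le_mul_of_one_le_of_one_le hc.one_le (mod_cast Nat.pos_of_ne_zero hL)
  obtain ⟨D, hD0, -, hD⟩ := hc.exists_denominator L S
  let mult (k : J → Fin T) : Multiset J := ∑ j, Multiset.replicate (k j) j
  have hmult : ∀ k, (mult k).card ≤ Fintype.card J * T := fun k => by
    simpa [mult] using sum_le_card_nsmul univ (fun j => (k j : ℕ)) T fun j _ => (k j).2.le
  let M : Matrix ((J → Fin T) × (IntegralBasisIndex K → Fin S)) (IntegralBasisIndex K → Fin L) K :=
    fun k l => auxCoeff α β τ D (mult k.1) (fun i => k.2 i) l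
  have hM : ∀ k l, IsIntegral ℤ (M k l) := fun k l =>
    isIntegral_auxCoeff (hD _ _ (fun i => (l i).2.le) fun i => (k.2 i).2.le).1
  have hMhouse : ∀ k l, house (M k l) ≤ (c * L) ^ (Fintype.card J * T) * c ^ (L * S) := fun k l =>
    (house_auxCoeff_le (hc.house_latticePoint_le L _ fun i => (l i).2.le)
      (hD _ _ (fun i => (l i).2.le) fun i => (k.2 i).2.le).2).trans
      (mul_le_mul_of_nonneg_right (pow_le_pow_right₀ hcL (hmult k.1))
        (pow_nonneg (zero_le_one.trans hc.one_le) _))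
  have hM0 : M ≠ 0 := fun h => by
    have h00 := congrFun (congrFun h (fun _ => ⟨0, Nat.pos_of_ne_zero hT⟩,
      fun _ => ⟨0, Nat.pos_of_ne_zero hS⟩)) fun _ => ⟨0, Nat.pos_of_ne_zero hL⟩
    simp [M, mult, auxCoeff, hD0, traceMonomial_ne_zero hα] at h00
  obtain ⟨p, hp0, hMp, hp⟩ := hc.siegel _ _ M _ hM0 hM
    (by simpa [card_integralBasisIndex] using hcard)
    (one_le_mul_of_one_le_of_one_le (one_le_pow₀ hcL) (one_le_pow₀ hc.one_le)) hMhouse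
  refine ⟨p, hp0, by simpa [card_integralBasisIndex] using hp, fun w hw s hs => ?_⟩
  have hrow := hMp
    (fun j => ⟨w.count j, (Multiset.count_le_card j w).trans_lt hw⟩, fun i => ⟨s i, hs i⟩)
  simp only [M, mult, sum_replicate_count, ← natCast_mul_auxSum] at hrow
  exact (mul_eq_zero.1 hrow).resolve_left (Nat.cast_ne_zero.2 hD0)

theorem coeffBound_le {n m e S T Y : ℕ} (hn : n ≠ 0) (hmn : m ≤ n) (hS : S ≠ 0) (hL : L ≠ 0)
    (hc : 1 ≤ c) (hT : IsLargeOrder n e c S L T) (hTY : T ≤ Y) :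
    c * (c * (L : ℝ) ^ n * ((c * L) ^ (m * T) * c ^ (L * S))) ≤ ((Y : ℝ) ^ Y) ^ (3 * n + 3) := by
  have hc0 : 0 ≤ c := zero_le_one.trans hc
  have hcT : c ≤ T := hT.le_self hn hc0
  have hcL : 1 ≤ c * L := one_le_mul_of_one_le_of_one_le hc (mod_cast Nat.pos_of_ne_zero hL)
  have hmT : (c * L) ^ (m * T) ≤ (((T : ℝ) ^ T) ^ 2) ^ n :=
    calc (c * L) ^ (m * T) ≤ (c * L) ^ (T * n) :=
          pow_le_pow_right₀ hcL (by rw [mul_comm]; gcongr)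
      _ = ((c * L) ^ T) ^ n := pow_mul _ _ _
      _ ≤ (((T : ℝ) ^ T) ^ 2) ^ n := by gcongr; exact hT.mul_pow_le hn hS hc0
  have hQ : (T : ℝ) ^ T ≤ (Y : ℝ) ^ Y := by
    exact_mod_cast (Nat.pow_le_pow_left hTY T).trans
      (Nat.pow_le_pow_right ((zero_lt_two.trans_le hT.two_le).trans_le hTY) hTY)
  calc c * (c * (L : ℝ) ^ n * ((c * L) ^ (m * T) * c ^ (L * S)))
      ≤ (T : ℝ) ^ T * ((T : ℝ) ^ T * ((T : ℝ) ^ T) ^ n *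
          ((((T : ℝ) ^ T) ^ 2) ^ n * (T : ℝ) ^ T)) := by
        gcongr
        · exact hcT.trans hT.self_le_pow
        · exact hcT.trans hT.self_le_pow
        · exact (Nat.cast_le.2 (hT.degree_le hS)).trans hT.self_le_pow
        · exact hT.pow_mul_le_pow hc0 hcT
    _ = ((T : ℝ) ^ T) ^ (3 * n + 3) := by ring
    _ ≤ ((Y : ℝ) ^ Y) ^ (3 * n + 3) := by gcongr

theorem exists_isIntegral_natCast_mul_auxSum {e S Y : ℕ} (hc : IsHeightBound φ α β ℓ c)
    (hS : S ≠ 0) (hY : IsLargeOrder (Module.finrank ℚ K) e c S L Y)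
    (hp : ∀ l, house (p l : K) ≤ ((Y : ℝ) ^ Y) ^ (3 * Module.finrank ℚ K + 3))
    (hw : w.card = Y) (hs : ∀ i, s i < S) :
    ∃ D : ℕ, D ≠ 0 ∧ D ≤ (Y : ℝ) ^ Y ∧ IsIntegral ℤ (D * auxSum α β τ p w s) ∧
      house (D * auxSum α β τ p w s) ≤ ((Y : ℝ) ^ Y) ^ (4 * Module.finrank ℚ K + 6) := by
  set n := Module.finrank ℚ K
  have hn : n ≠ 0 := Module.finrank_pos.ne'
  have hc0 : 0 ≤ c := zero_le_one.trans hc.one_le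
  have hcQ : c ^ (L * S) ≤ (Y : ℝ) ^ Y := hY.pow_mul_le_pow hc0 (hY.le_self hn hc0)
  obtain ⟨D, hD0, hDle, hD⟩ := hc.exists_denominator L S
  have hDbox := fun l : IntegralBasisIndex K → Fin L =>
    hD _ s (fun i => (l i).2.le) fun i => (hs i).le
  refine ⟨D, hD0, hDle.trans hcQ, ?_, ?_⟩
  · rw [natCast_mul_auxSum]
    exact IsIntegral.sum _ fun l _ => (isIntegral_auxCoeff (hDbox l).1).mul (p l).isIntegral_coe
  · calc house (D * auxSum α β τ p w s)
        ≤ (L : ℝ) ^ n * ((c * L) ^ Y * c ^ (L * S) * ((Y : ℝ) ^ Y) ^ (3 * n + 3)) := by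
          refine house_natCast_mul_auxSum_le hp fun l => ?_
          rw [← hw]
          exact house_auxCoeff_le (hc.house_latticePoint_le L _ fun i => (l i).2.le) (hDbox l).2
      _ ≤ ((Y : ℝ) ^ Y) ^ n * (((Y : ℝ) ^ Y) ^ 2 * (Y : ℝ) ^ Y * ((Y : ℝ) ^ Y) ^ (3 * n + 3)) := by
          gcongr
          · exact (Nat.cast_le.2 (hY.degree_le hS)).trans hY.self_le_pow
          · exact hY.mul_pow_le hn hS hc0
      _ = ((Y : ℝ) ^ Y) ^ (4 * n + 6) := by ring

section Extrapolation

variable [IsGalois ℚ K] {e S Y : ℕ}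
  {w : Multiset {σ : K ≃ₐ[ℚ] K // conjForm φ β ℓ σ ≠ 0}}

theorem traceExponent_eq_sum_subtype (φ : K →+* ℂ) (β : ι → 𝓞 K) (ℓ : ι → ℂ) (x : 𝓞 K) :
    traceExponent β ℓ x =
      ∑ σ : {σ : K ≃ₐ[ℚ] K // conjForm φ β ℓ σ ≠ 0}, φ (σ.1 x) * conjForm φ β ℓ σ := by
  classical
  rw [traceExponent_eq_sum φ,
    ← Fintype.sum_subtype_add_sum_subtype fun σ => conjForm φ β ℓ σ ≠ 0, add_eq_left]
  exact sum_eq_zero fun σ _ => by rw [not_not.1 σ.2, mul_zero]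

theorem norm_map_auxSum_le (hαℓ : ∀ b, φ (α b) = Complex.exp (ℓ b))
    (hc : IsHeightBound φ α β ℓ c) (hS : S ≠ 0) (hL : L ≠ 0)
    (hY : IsLargeOrder (Module.finrank ℚ K) e c S L Y)
    (hp : ∀ l, house (p l : K) ≤ ((Y : ℝ) ^ Y) ^ (3 * Module.finrank ℚ K + 3))
    (hzero : ∀ w : Multiset {σ : K ≃ₐ[ℚ] K // conjForm φ β ℓ σ ≠ 0}, w.card < Y → ∀ s,
      (∀ i, s i < S) → auxSum α β Subtype.val p w s = 0)
    (hw : w.card = Y) (hs : ∀ i, s i < S) :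
    ‖φ (auxSum α β Subtype.val p w s)‖ ≤
      (((Y : ℝ) ^ Y) ^ e)⁻¹ * ((Y : ℝ) ^ Y) ^ (4 * Module.finrank ℚ K + 9) := by
  set n := Module.finrank ℚ K
  have hn : n ≠ 0 := Module.finrank_pos.ne'
  have hc0 : 0 ≤ c := zero_le_one.trans hc.one_le
  have : Nonempty (IntegralBasisIndex K) :=
    Fintype.card_pos_iff.1 (by rw [card_integralBasisIndex]; exact Module.finrank_pos)
  choose d hd hφd using fun σ : {σ : K ≃ₐ[ℚ] K // conjForm φ β ℓ σ ≠ 0} =>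
    hc.exists_sum_norm_le σ σ.2
  have hbound := norm_mixedExpSum_le_of_zeros (p := fun l => φ (p l))
    (a := fun l i => traceExponent β ℓ (boxPoint l * RingOfIntegers.basis K i))
    (b := fun l (σ : {σ : K ≃ₐ[ℚ] K // conjForm φ β ℓ σ ≠ 0}) => φ (σ.1 (boxPoint l)))
    (x := fun i σ => φ (σ.1 (RingOfIntegers.basis K i)) * conjForm φ β ℓ σ) (c := d)
    (fun l i => by
      rw [traceExponent_eq_sum_subtype φ]
      refine sum_congr rfl fun σ _ => ?_
      push_cast
      rw [map_mul, map_mul]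
      ring)
    (fun l σ => hφd σ _) hd
    (one_le_mul_of_one_le_of_one_le hc.one_le (mod_cast Nat.pos_of_ne_zero hL))
    (fun l i => hc.norm_traceExponent_le i L _ fun i => (l i).2.le)
    (by positivity) (fun l => (norm_embedding_le_house _ φ).trans (hp l))
    hY.two_mul_le_div (by simpa only [card_integralBasisIndex] using hY.schwarz_le)
    (fun w hw s hs => by rw [← map_auxSum hαℓ, hzero w hw s hs, map_zero]) hw hs
  rw [← map_auxSum hαℓ, card_integralBasisIndex, card_integralBasisIndex_fun, Nat.cast_pow]
    at hbound
  calc ‖φ (auxSum α β Subtype.val p w s)‖ ≤ _ := hbound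
    _ ≤ (Y : ℝ) ^ Y * ((Y : ℝ) ^ Y * ((((Y : ℝ) ^ Y) ^ e)⁻¹ *
          (((Y : ℝ) ^ Y) ^ n * (((Y : ℝ) ^ Y) ^ (3 * n + 3) * ((Y : ℝ) ^ Y) ^ 2 *
            (Y : ℝ) ^ Y) * (Y : ℝ) ^ Y))) := by
        gcongr
        · exact hY.le_self hn hc0
        · exact_mod_cast Nat.factorial_le_pow Y
        · exact (Nat.cast_le.2 (hY.degree_le hS)).trans hY.self_le_pow
        · exact hY.mul_pow_le hn hS hc0
        · exact hY.exp_mul_le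
        · exact hY.exp_mul_div_le hn hc0 hL
    _ = (((Y : ℝ) ^ Y) ^ e)⁻¹ * ((Y : ℝ) ^ Y) ^ (4 * n + 9) := by ring

theorem auxSum_eq_zero_of_card_eq (hαℓ : ∀ b, φ (α b) = Complex.exp (ℓ b))
    (hc : IsHeightBound φ α β ℓ c) (hS : S ≠ 0) (hL : L ≠ 0)
    (he : 4 * Module.finrank ℚ K + 10 + (4 * Module.finrank ℚ K + 6) * Module.finrank ℚ K < e)
    (hY : IsLargeOrder (Module.finrank ℚ K) e c S L Y)
    (hp : ∀ l, house (p l : K) ≤ ((Y : ℝ) ^ Y) ^ (3 * Module.finrank ℚ K + 3))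
    (hzero : ∀ w : Multiset {σ : K ≃ₐ[ℚ] K // conjForm φ β ℓ σ ≠ 0}, w.card < Y → ∀ s,
      (∀ i, s i < S) → auxSum α β Subtype.val p w s = 0)
    (hw : w.card = Y) (hs : ∀ i, s i < S) : auxSum α β Subtype.val p w s = 0 := by
  obtain ⟨D, hD0, hDle, hintegral, hhouse⟩ :=
    exists_isIntegral_natCast_mul_auxSum (τ := Subtype.val) hc hS hY hp hw hs
  set n := Module.finrank ℚ K
  have hQ : 1 < (Y : ℝ) ^ Y := hY.one_lt_pow
  by_contra hne
  have hliouville := one_le_norm_mul_house_pow φ hintegral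
    (mul_ne_zero (Nat.cast_ne_zero.2 hD0) hne)
  refine hliouville.not_gt ?_
  calc ‖φ (D * auxSum α β Subtype.val p w s)‖ *
        house (D * auxSum α β Subtype.val p w s) ^ (n - 1)
      ≤ (Y : ℝ) ^ Y * ((((Y : ℝ) ^ Y) ^ e)⁻¹ * ((Y : ℝ) ^ Y) ^ (4 * n + 9)) *
          (((Y : ℝ) ^ Y) ^ (4 * n + 6)) ^ n := by
        rw [map_mul, map_natCast, norm_mul, Complex.norm_natCast]
        gcongr
        · exact pow_nonneg (house_nonneg _) _
        · exact norm_map_auxSum_le hαℓ hc hS hL hY hp hzero hw hs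
        · exact (pow_le_pow_left₀ (house_nonneg _) hhouse _).trans
            (pow_le_pow_right₀ (one_le_pow₀ hQ.le) (Nat.sub_le n 1))
    _ = ((Y : ℝ) ^ Y) ^ (4 * n + 10 + (4 * n + 6) * n) / ((Y : ℝ) ^ Y) ^ e := by ring
    _ < 1 := (div_lt_one (by positivity)).2 (pow_lt_pow_right₀ hQ he)

/-- If one conjugate of a linear form in logarithms vanishes, fewer than `[K : ℚ]` directions of
differentiation matter, which leaves room in Siegel's lemma for an auxiliary function vanishing to
high order; extrapolation then makes it vanish to infinite order. -/
theorem conjForm_eq_zero (hαℓ : ∀ b, φ (α b) = Complex.exp (ℓ b)) {σ₁ : K ≃ₐ[ℚ] K}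
    (h : conjForm φ β ℓ σ₁ = 0) (σ : K ≃ₐ[ℚ] K) : conjForm φ β ℓ σ = 0 := by
  classical
  by_contra hσ
  have hα : ∀ b, α b ≠ 0 := fun b hb => Complex.exp_ne_zero (ℓ b) <| by rw [← hαℓ, hb, map_zero]
  have hcard : Fintype.card {σ : K ≃ₐ[ℚ] K // conjForm φ β ℓ σ ≠ 0} < Module.finrank ℚ K := by
    rw [← IsGalois.card_aut_eq_finrank, Nat.card_eq_fintype_card]
    exact Fintype.card_subtype_lt (not_not.2 h)
  obtain ⟨c, hc⟩ := exists_isHeightBound φ α β ℓ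
  obtain ⟨S, T, L, hS, hT, hL, hTSL, hlarge⟩ :=
    exists_forall_isLargeOrder hcard (Nat.succ_ne_zero
      (4 * Module.finrank ℚ K + 10 + (4 * Module.finrank ℚ K + 6) * Module.finrank ℚ K)) c
  obtain ⟨p, hp0, hp, hzero⟩ := exists_auxSum_eq_zero Subtype.val hα hc hS hT hL hTSL
  have hvanish : ∀ Y, ∀ w : Multiset {σ : K ≃ₐ[ℚ] K // conjForm φ β ℓ σ ≠ 0}, w.card = Y → ∀ s,
      (∀ i, s i < S) → auxSum α β Subtype.val p w s = 0 := by
    intro Y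
    induction Y using Nat.strong_induction_on with
    | _ Y ih =>
      intro w hw s hs
      obtain hYT | hTY := lt_or_ge Y T
      · exact hzero w (hw.trans_lt hYT) s hs
      · exact auxSum_eq_zero_of_card_eq hαℓ hc hS hL (Nat.lt_succ_self _) (hlarge Y hTY)
          (fun l => (hp l).trans (coeffBound_le Module.finrank_pos.ne' hcard.le hS hL hc.one_le
            (hlarge T le_rfl) hTY)) (fun w hw => ih _ hw w rfl) hw hs
  exact hp0 (eq_zero_of_forall_auxSum_eq_zero ⟨σ, hσ⟩ fun k =>
    hvanish _ _ rfl 0 fun _ => Nat.pos_of_ne_zero hS)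

end Extrapolation

end AuxiliaryFunction

/-! ### Dirichlet series with bounded coefficient sums -/

section BoundedCoefficientSums

lemma sum_range_smul_by_parts {E : Type*} [AddCommGroup E] [Module ℝ E] (v : ℕ → ℝ) (g : ℕ → E)
    (N : ℕ) :
    ∑ n ∈ range N, (v n - v (n + 1)) • ∑ i ∈ range (n + 1), g i + v N • ∑ i ∈ range N, g i =
      ∑ n ∈ range N, v n • g n := by
  induction N with
  | zero => simp
  | succ N ih =>
    rw [sum_range_succ, sum_range_succ g, sum_range_succ (fun n => v n • g n), ← ih]
    module

lemma tendsto_sum_smul_of_summable_sub {E : Type*} [NormedAddCommGroup E] [NormedSpace ℝ E]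
    [CompleteSpace E] {v : ℕ → ℝ} {g : ℕ → E} {M : ℝ} (hv : Tendsto v atTop (𝓝 0))
    (hv' : Summable fun n => ‖v n - v (n + 1)‖) (hg : ∀ N, ‖∑ i ∈ range N, g i‖ ≤ M) :
    Tendsto (fun N => ∑ n ∈ range N, v n • g n) atTop
      (𝓝 (∑' n, (v n - v (n + 1)) • ∑ i ∈ range (n + 1), g i)) := by
  have hsum : Summable fun n => (v n - v (n + 1)) • ∑ i ∈ range (n + 1), g i :=
    .of_norm_bounded (hv'.mul_right M) fun n => by rw [norm_smul]; gcongr; exact hg _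
  have hboundary : Tendsto (fun N => v N • ∑ i ∈ range N, g i) atTop (𝓝 0) := by
    refine squeeze_zero_norm (a := fun N => ‖v N‖ * M) (fun N => ?_)
      (by simpa using hv.norm.mul_const M)
    rw [norm_smul]
    gcongr
    exact hg N
  simpa only [sum_range_smul_by_parts, add_zero] using hsum.hasSum.tendsto_sum_nat.add hboundary

lemma norm_rpow_neg_sub_rpow_neg_le {s : ℝ} (hs₁ : 1 ≤ s) (hs₂ : s ≤ 2) {x : ℝ} (hx : 1 ≤ x) :
    ‖x ^ (-s) - (x + 1) ^ (-s)‖ ≤ 2 / x ^ 2 := by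
  have : 0 < x := by linarith
  have bernoulli : 1 - s / (x + 1) ≤ (x / (x + 1)) ^ s := by
    have := one_add_mul_self_le_rpow_one_add (s := -(1 / (x + 1))) (p := s)
      (by rw [neg_le_neg_iff, div_le_one (by positivity)]; linarith) hs₁
    convert this using 2 <;> field_simp <;> ring
  have hfactor : x ^ (-s) - (x + 1) ^ (-s) = x ^ (-s) * (1 - (x / (x + 1)) ^ s) := by
    rw [Real.div_rpow (by positivity) (by positivity), Real.rpow_neg (by positivity),
      Real.rpow_neg (by positivity)]
    field_simp
  have hratio : (x / (x + 1)) ^ s ≤ 1 :=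
    Real.rpow_le_one (by positivity) ((div_le_one (by positivity)).2 (by linarith)) (by linarith)
  rw [hfactor, Real.norm_of_nonneg (mul_nonneg (by positivity) (by linarith))]
  calc x ^ (-s) * (1 - (x / (x + 1)) ^ s) ≤ x ^ (-1 : ℝ) * (2 / x) := by
        gcongr ?_ * ?_
        · exact Real.rpow_le_rpow_of_exponent_le hx (by linarith)
        · have : s / (x + 1) ≤ 2 / x := by gcongr; linarith
          linarith
    _ = 2 / x ^ 2 := by rw [Real.rpow_neg_one]; field_simp

variable {c : ℕ → ℂ} {M : ℝ}

/-- The value at `s` of the Dirichlet series `∑ c n / n ^ s` after summation by parts. Unlike the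
series itself, it converges absolutely for `1 ≤ s ≤ 2` as soon as the sums `∑_{n ≤ N} c n` are
bounded. -/
noncomputable def dirichletSumByParts (c : ℕ → ℂ) (s : ℝ) : ℂ :=
  ∑' n : ℕ, (((n : ℝ) + 1) ^ (-s) - ((n : ℝ) + 1 + 1) ^ (-s)) • ∑ i ∈ range (n + 1), c (i + 1)

lemma summable_two_div_add_one_sq : Summable fun n : ℕ => 2 / ((n : ℝ) + 1) ^ 2 := by
  have := (summable_nat_add_iff 1).2 (Real.summable_one_div_nat_pow.2 one_lt_two)
  simpa [div_eq_mul_inv] using this.mul_left 2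

lemma norm_dirichletSumByParts_coeff_le {s : ℝ} (hs₁ : 1 ≤ s) (hs₂ : s ≤ 2) (n : ℕ) :
    ‖((n : ℝ) + 1) ^ (-s) - ((n : ℝ) + 1 + 1) ^ (-s)‖ ≤ 2 / ((n : ℝ) + 1) ^ 2 :=
  norm_rpow_neg_sub_rpow_neg_le hs₁ hs₂ (by simp)

lemma tendsto_sum_rpow_neg_smul (hc : ∀ N, ‖∑ i ∈ range N, c (i + 1)‖ ≤ M) {s : ℝ} (hs₁ : 1 ≤ s)
    (hs₂ : s ≤ 2) :
    Tendsto (fun N => ∑ n ∈ range N, ((n : ℝ) + 1) ^ (-s) • c (n + 1)) atTop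
      (𝓝 (dirichletSumByParts c s)) := by
  have hv : Tendsto (fun n : ℕ => ((n : ℝ) + 1) ^ (-s)) atTop (𝓝 0) :=
    (tendsto_rpow_neg_atTop (by linarith)).comp
      (tendsto_atTop_add_const_right _ 1 tendsto_natCast_atTop_atTop)
  have hv' : Summable fun n : ℕ => ‖((n : ℝ) + 1) ^ (-s) - (((n + 1 : ℕ) : ℝ) + 1) ^ (-s)‖ := by
    push_cast
    exact .of_nonneg_of_le (fun _ => norm_nonneg _) (norm_dirichletSumByParts_coeff_le hs₁ hs₂)
      summable_two_div_add_one_sq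
  simpa [dirichletSumByParts] using
    tendsto_sum_smul_of_summable_sub hv hv' (g := fun i => c (i + 1)) hc

lemma tendsto_dirichletSumByParts_one (hc : ∀ N, ‖∑ i ∈ range N, c (i + 1)‖ ≤ M) :
    Tendsto (dirichletSumByParts c) (𝓝[>] 1) (𝓝 (dirichletSumByParts c 1)) := by
  refine tendsto_tsum_of_dominated_convergence (summable_two_div_add_one_sq.mul_right M)
    (fun n => ?_) ?_
  · have hcont : Continuous fun s : ℝ => ((n : ℝ) + 1) ^ (-s) - ((n : ℝ) + 1 + 1) ^ (-s) := by
      refine .sub ?_ ?_ <;>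
        exact .rpow continuous_const continuous_neg fun _ => Or.inl (by positivity)
    exact ((hcont.tendsto 1).mono_left nhdsWithin_le_nhds).smul_const _
  · filter_upwards [Ioo_mem_nhdsGT one_lt_two] with s hs n
    rw [norm_smul]
    gcongr
    · exact norm_dirichletSumByParts_coeff_le hs.1.le hs.2.le n
    · exact hc _

lemma tendsto_sum_div_dirichletSumByParts (hc : ∀ N, ‖∑ i ∈ range N, c (i + 1)‖ ≤ M) :
    Tendsto (fun N => ∑ n ∈ range N, c n / n) atTop (𝓝 (dirichletSumByParts c 1)) := by
  rw [← tendsto_add_atTop_iff_nat 1]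
  refine (tendsto_sum_rpow_neg_smul hc le_rfl one_le_two).congr fun N => ?_
  rw [sum_range_succ']
  simp [Real.rpow_neg_one, div_eq_inv_mul]

lemma tendsto_sum_range_of_LSeriesSummable {s : ℝ} (hs : LSeriesSummable c s) :
    Tendsto (fun N => ∑ n ∈ range N, ((n : ℝ) + 1) ^ (-s) • c (n + 1)) atTop (𝓝 (LSeries c s)) := by
  have := hs.hasSum.tendsto_sum_nat
  rw [← tendsto_add_atTop_iff_nat 1] at this
  refine this.congr fun N => ?_
  rw [sum_range_succ', LSeries.term_zero, add_zero]
  refine sum_congr rfl fun n _ => ?_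
  rw [LSeries.term_of_ne_zero n.succ_ne_zero, Complex.real_smul,
    Complex.ofReal_cpow (by positivity), div_eq_inv_mul]
  push_cast
  rw [Complex.cpow_neg]

lemma LSeriesSummable_of_norm_sum_le (hc : ∀ N, ‖∑ i ∈ range N, c (i + 1)‖ ≤ M) {s : ℝ}
    (hs : 1 < s) : LSeriesSummable c s := by
  refine LSeriesSummable_of_bounded_of_one_lt_real (m := M + M) (fun n hn => ?_) hs
  obtain ⟨n, rfl⟩ := Nat.exists_eq_succ_of_ne_zero hn
  have hdiff : c (n + 1) = ∑ i ∈ range (n + 1), c (i + 1) - ∑ i ∈ range n, c (i + 1) := by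
    rw [sum_range_succ, add_sub_cancel_left]
  exact hdiff ▸ norm_sub_le_of_le (hc _) (hc _)

lemma tendsto_LSeries_dirichletSumByParts (hc : ∀ N, ‖∑ i ∈ range N, c (i + 1)‖ ≤ M) :
    Tendsto (fun s : ℝ => LSeries c s) (𝓝[>] 1) (𝓝 (dirichletSumByParts c 1)) := by
  refine (tendsto_dirichletSumByParts_one hc).congr' ?_
  filter_upwards [Ioo_mem_nhdsGT one_lt_two] with s hs
  exact tendsto_nhds_unique (tendsto_sum_rpow_neg_smul hc hs.1.le hs.2.le)
    (tendsto_sum_range_of_LSeriesSummable (LSeriesSummable_of_norm_sum_le hc hs.1))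

end BoundedCoefficientSums

/-! ### Periodic Dirichlet series at `1` -/

section PeriodicDirichletSeries

variable {q : ℕ} [NeZero q] {Φ : ZMod q → ℂ}

lemma sum_range_zmod_natCast_add (Φ : ZMod q → ℂ) (x : ZMod q) :
    ∑ i ∈ range q, Φ (x + (i : ZMod q)) = ∑ a, Φ a := by
  refine sum_nbij' (fun i => x + (i : ZMod q)) (fun a => (a - x).val) (by simp)
    (fun a _ => mem_range.2 (ZMod.val_lt _)) (fun i hi => ?_) (by simp) (by simp)
  rw [add_sub_cancel_left, ZMod.val_cast_of_lt (mem_range.1 hi)]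

lemma exists_norm_sum_range_zmod_le (hΦ : ∑ a, Φ a = 0) :
    ∃ M : ℝ, ∀ N, ‖∑ i ∈ range N, Φ ((i + 1 : ℕ) : ZMod q)‖ ≤ M := by
  let S : ℕ → ℝ := fun N => ‖∑ i ∈ range N, Φ ((i + 1 : ℕ) : ZMod q)‖
  have hS : Function.Periodic S q := fun N => by
    have hperiod : ∑ i ∈ range q, Φ ((N + i + 1 : ℕ) : ZMod q) = 0 := by
      rw [← hΦ, ← sum_range_zmod_natCast_add Φ (N + 1)]
      exact sum_congr rfl fun i _ => by push_cast; rw [add_right_comm]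
    simp only [S, sum_range_add, hperiod, add_zero]
  refine ⟨∑ r ∈ range q, S r, fun N => ?_⟩
  change S N ≤ _
  rw [← hS.map_mod_nat N]
  exact single_le_sum (f := S) (fun _ _ => norm_nonneg _) (mem_range.2 (N.mod_lt (NeZero.pos q)))

lemma tendsto_ofReal_nhdsGT_one : Tendsto ((↑) : ℝ → ℂ) (𝓝[>] 1) (𝓝[≠] 1) := by
  refine tendsto_nhdsWithin_iff.2 ⟨?_, ?_⟩
  · exact (Complex.continuous_ofReal.tendsto' 1 1 Complex.ofReal_one).mono_left nhdsWithin_le_nhds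
  · filter_upwards [self_mem_nhdsWithin] with s hs
    simpa using (ne_of_gt hs : s ≠ 1)

lemma tendsto_LSeries_LFunction_one (hΦ : ∑ a, Φ a = 0) :
    Tendsto (fun s : ℝ => LSeries (Φ ·) s) (𝓝[>] 1) (𝓝 (ZMod.LFunction Φ 1)) := by
  have hcont := (ZMod.differentiable_LFunction_of_sum_zero hΦ).continuous.tendsto 1
  refine ((hcont.mono_left nhdsWithin_le_nhds).comp tendsto_ofReal_nhdsGT_one).congr' ?_
  filter_upwards [self_mem_nhdsWithin] with s hs
  exact ZMod.LFunction_eq_LSeries Φ (by simpa using hs)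

lemma tendsto_sum_div_LFunction_one (hΦ : ∑ a, Φ a = 0) :
    Tendsto (fun N => ∑ n ∈ range N, Φ (n : ZMod q) / n) atTop (𝓝 (ZMod.LFunction Φ 1)) := by
  obtain ⟨M, hM⟩ := exists_norm_sum_range_zmod_le hΦ
  rw [← tendsto_nhds_unique (tendsto_LSeries_dirichletSumByParts (c := (Φ ·)) hM)
    (tendsto_LSeries_LFunction_one hΦ)]
  exact tendsto_sum_div_dirichletSumByParts (c := (Φ ·)) hM

lemma not_tendsto_sum_range_inv (l : ℂ) :
    ¬ Tendsto (fun N => ∑ n ∈ range N, (n : ℂ)⁻¹) atTop (𝓝 l) := by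
  intro h
  have hre := ((Complex.continuous_re.tendsto l).comp h).comp (tendsto_add_atTop_nat 1)
  refine not_tendsto_nhds_of_tendsto_atTop Real.tendsto_sum_range_one_div_nat_succ_atTop _
    (hre.congr fun N => ?_)
  have hcast : ∑ n ∈ range (N + 1), (n : ℂ)⁻¹ = ((∑ n ∈ range (N + 1), (n : ℝ)⁻¹ : ℝ) : ℂ) := by
    push_cast; rfl
  simp only [Function.comp_apply, hcast, Complex.ofReal_re]
  rw [sum_range_succ']
  simp

lemma sum_eq_zero_of_tendsto_sum_div {l : ℂ}
    (h : Tendsto (fun N => ∑ n ∈ range N, Φ (n : ZMod q) / n) atTop (𝓝 l)) : ∑ a, Φ a = 0 := by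
  have hq : (q : ℂ) ≠ 0 := NeZero.ne _
  let μ : ℂ := (∑ a, Φ a) / q
  have hcentred : ∑ a, (Φ a - μ) = 0 := by
    simp [sum_sub_distrib, μ, mul_div_cancel₀ _ hq]
  by_contra hne
  have hμ : μ ≠ 0 := div_ne_zero hne hq
  refine not_tendsto_sum_range_inv _
    (((h.sub (tendsto_sum_div_LFunction_one hcentred)).div_const μ).congr fun N => ?_)
  rw [← sum_sub_distrib, sum_div]
  refine sum_congr rfl fun n _ => ?_
  rw [← sub_div, sub_sub_cancel, div_right_comm, div_self hμ, one_div]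

lemma one_sub_mem_slitPlane {z : ℂ} (hz : ‖z‖ = 1) (hz' : z ≠ 1) : 1 - z ∈ Complex.slitPlane := by
  have hre : z.re ≠ ‖z‖ := fun h => hz' <| by
    rw [Complex.re_eq_norm] at h
    rw [Complex.eq_coe_norm_of_nonneg h, hz, Complex.ofReal_one]
  have := (Complex.re_le_norm z).lt_of_ne hre
  exact Complex.mem_slitPlane_iff.2 (.inl (by simpa [hz] using this))

open scoped ZMod

lemma stdAddChar_eq_one_iff {b : ZMod q} : ZMod.stdAddChar b = 1 ↔ b = 0 :=
  AddChar.IsPrimitive.zmod_char_eq_one_iff q (ZMod.isPrimitive_stdAddChar q) b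

lemma hasSum_dft_mul_neg_log (Φ : ZMod q → ℂ) {x : ℝ} (hx : |x| < 1) :
    HasSum (fun n : ℕ => q * (Φ n / n * (x : ℂ) ^ n))
      (∑ b, 𝓕 Φ b * -Complex.log (1 - ZMod.stdAddChar b * x)) := by
  have hlog : HasSum (fun n : ℕ => ∑ b, 𝓕 Φ b * ((ZMod.stdAddChar b * (x : ℂ)) ^ n / n))
      (∑ b, 𝓕 Φ b * -Complex.log (1 - ZMod.stdAddChar b * x)) :=
    hasSum_sum fun b _ => (Complex.hasSum_taylorSeries_neg_log (by simpa using hx)).mul_left _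
  refine hlog.congr_fun fun n => ?_
  have hinv : q * Φ n = ∑ b, 𝓕 Φ b * ZMod.stdAddChar b ^ n := by
    have := ZMod.invDFT_apply (𝓕 Φ) (n : ZMod q)
    rw [LinearEquiv.symm_apply_apply, smul_eq_mul, eq_inv_mul_iff_mul_eq₀ (NeZero.ne _)] at this
    rw [this]
    refine sum_congr rfl fun b _ => ?_
    rw [← AddChar.map_nsmul_eq_pow, nsmul_eq_mul, smul_eq_mul, mul_comm b, mul_comm]
  calc q * (Φ n / n * (x : ℂ) ^ n) = q * Φ n * ((x : ℂ) ^ n / n) := by ring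
    _ = ∑ b, 𝓕 Φ b * ((ZMod.stdAddChar b * (x : ℂ)) ^ n / n) := by
      rw [hinv, sum_mul]
      exact sum_congr rfl fun b _ => by ring

lemma tendsto_sum_dft_mul_neg_log (hΦ : ∑ a, Φ a = 0) :
    Tendsto (fun x : ℝ => ∑ b, 𝓕 Φ b * -Complex.log (1 - ZMod.stdAddChar b * x)) (𝓝[<] 1)
      (𝓝 (∑ b, 𝓕 Φ b * -Complex.log (1 - ZMod.stdAddChar b))) := by
  refine tendsto_finsetSum _ fun b _ => ?_
  rcases eq_or_ne b 0 with rfl | hb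
  · simp [ZMod.dft_apply_zero, hΦ]
  · have hslit := one_sub_mem_slitPlane (AddChar.norm_apply _ b) (stdAddChar_eq_one_iff.not.2 hb)
    have hlin : ContinuousAt (fun x : ℝ => 1 - ZMod.stdAddChar b * (x : ℂ)) 1 := by fun_prop
    have hlog := (hlin.clog (by simpa using hslit)).tendsto
    simp only [Complex.ofReal_one, mul_one] at hlog
    exact (hlog.mono_left nhdsWithin_le_nhds).neg.const_mul _

theorem sum_dft_mul_log_eq (hΦ : ∑ a, Φ a = 0) :
    ∑ b, 𝓕 Φ b * Complex.log (1 - ZMod.stdAddChar b) = -(q * ZMod.LFunction Φ 1) := by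
  have habel := Complex.tendsto_tsum_powerSeries_nhdsWithin_lt (tendsto_sum_div_LFunction_one hΦ)
  rw [tendsto_map'_iff] at habel
  have hseries : ∀ᶠ x : ℝ in 𝓝[<] 1, q * ∑' n : ℕ, Φ n / n * (x : ℂ) ^ n =
      ∑ b, 𝓕 Φ b * -Complex.log (1 - ZMod.stdAddChar b * x) := by
    filter_upwards [Ioo_mem_nhdsLT (show (-1 : ℝ) < 1 by norm_num)] with x hx
    rw [← tsum_mul_left, (hasSum_dft_mul_neg_log Φ (abs_lt.2 hx)).tsum_eq]
  rw [← tendsto_nhds_unique (tendsto_sum_dft_mul_neg_log hΦ) ((habel.const_mul _).congr' hseries)]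
  simp

end PeriodicDirichletSeries

/-! ### Galois conjugation of a vanishing `L`-value -/

section GaloisConjugation

variable {q : ℕ} [NeZero q]

lemma stdAddChar_eq_pow_val (a : ZMod q) :
    (ZMod.stdAddChar a : ℂ) = ZMod.stdAddChar (1 : ZMod q) ^ a.val := by
  rw [← AddChar.map_nsmul_eq_pow, nsmul_one, ZMod.natCast_zmod_val]

lemma isPrimitiveRoot_stdAddChar_one : IsPrimitiveRoot (ZMod.stdAddChar (1 : ZMod q) : ℂ) q := by
  refine .mk_of_lt _ (NeZero.pos q) ?_ fun k hk hkq => ?_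
  · rw [← AddChar.map_nsmul_eq_pow, nsmul_one, ZMod.natCast_self, AddChar.map_zero_eq_one]
  · rw [← AddChar.map_nsmul_eq_pow, nsmul_one, Ne, stdAddChar_eq_one_iff,
      ZMod.natCast_eq_zero_iff]
    exact Nat.not_dvd_of_pos_of_lt hk hkq

variable {K : Type*} [Field K] [NumberField K] {ζ : K}

/-- The discrete Fourier transform of an integer-valued function on `ℤ/q`, formed in the ring of
integers of a field containing a primitive `q`-th root of unity `ζ`. -/
noncomputable def integralDFT (hζ : IsPrimitiveRoot ζ q) (F : ZMod q → ℤ) (b : ZMod q) : 𝓞 K :=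
  ∑ a, (F a : 𝓞 K) * hζ.toInteger ^ (-(a * b)).val

open scoped ZMod

lemma map_algEquiv_integralDFT (hζ : IsPrimitiveRoot ζ q) {φ : K →+* ℂ}
    (hφ : ∀ a : ZMod q, φ (ζ ^ a.val) = ZMod.stdAddChar a) {σ : K ≃ₐ[ℚ] K} {u : (ZMod q)ˣ}
    (hσ : ∀ a : ZMod q, σ (ζ ^ a.val) = ζ ^ (u.val * a).val) (F : ZMod q → ℤ) (b : ZMod q) :
    φ (σ (integralDFT hζ F b)) = 𝓕 (fun a => (F a : ℂ)) (u * b) := by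
  have hcoe : (integralDFT hζ F b : K) = ∑ a, (F a : K) * ζ ^ (-(a * b)).val := by
    simp only [integralDFT, map_sum, map_mul, map_intCast, map_pow]
    rfl
  rw [hcoe, ZMod.dft_apply]
  simp only [map_sum, map_mul, map_intCast, hσ, hφ, smul_eq_mul]
  refine sum_congr rfl fun a _ => ?_
  rw [mul_comm, mul_neg, mul_left_comm]

lemma conjForm_integralDFT_eq (hζ : IsPrimitiveRoot ζ q) {φ : K →+* ℂ}
    (hφ : ∀ a : ZMod q, φ (ζ ^ a.val) = ZMod.stdAddChar a) {σ : K ≃ₐ[ℚ] K} {u : (ZMod q)ˣ}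
    (hσ : ∀ a : ZMod q, σ (ζ ^ a.val) = ζ ^ (u⁻¹.val * a).val) {F : ZMod q → ℤ}
    (hF : ∑ a, F a = 0) :
    conjForm φ (integralDFT hζ F) (fun b => Complex.log (1 - ZMod.stdAddChar b)) σ =
      -(q * ZMod.LFunction (fun a => (F (u.val * a) : ℂ)) 1) := by
  have hFu : ∑ a, (F (u.val * a) : ℂ) = 0 :=
    (Equiv.sum_comp (Units.mulLeft u) fun a => (F a : ℂ)).trans (mod_cast hF)
  rw [← sum_dft_mul_log_eq hFu, conjForm]
  refine sum_congr rfl fun b _ => ?_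
  rw [map_algEquiv_integralDFT hζ hφ hσ, ZMod.dft_comp_unitMul (fun a => (F a : ℂ))]

variable [IsCyclotomicExtension {q} ℚ K]

lemma exists_ringHom_pow_val_eq_stdAddChar (hζ : IsPrimitiveRoot ζ q) :
    ∃ φ : K →+* ℂ, ∀ a : ZMod q, φ (ζ ^ a.val) = ZMod.stdAddChar a := by
  let e := hζ.embeddingsEquivPrimitiveRoots ℂ (Polynomial.cyclotomic.irreducible_rat (NeZero.pos q))
  let ω : primitiveRoots q ℂ :=
    ⟨_, (mem_primitiveRoots (NeZero.pos q)).2 isPrimitiveRoot_stdAddChar_one⟩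
  have hω : e.symm ω ζ = ω := by
    rw [← hζ.embeddingsEquivPrimitiveRoots_apply_coe ℂ
      (Polynomial.cyclotomic.irreducible_rat (NeZero.pos q)) (e.symm ω), Equiv.apply_symm_apply]
  refine ⟨(e.symm ω : K →+* ℂ), fun a => ?_⟩
  rw [stdAddChar_eq_pow_val, map_pow]
  exact congrArg (· ^ a.val) hω

lemma exists_algEquiv_pow_val_eq (hζ : IsPrimitiveRoot ζ q) (u : (ZMod q)ˣ) :
    ∃ σ : K ≃ₐ[ℚ] K, ∀ a : ZMod q, σ (ζ ^ a.val) = ζ ^ (u.val * a).val := by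
  refine ⟨(IsCyclotomicExtension.Rat.galEquivZMod q K).symm u, fun a => ?_⟩
  rw [map_pow, IsCyclotomicExtension.Rat.galEquivZMod_apply_of_pow_eq q K _ hζ.pow_eq_one,
    MulEquiv.apply_symm_apply, ← pow_mul, ZMod.val_mul]
  exact pow_eq_pow_mod _ hζ.pow_eq_one

end GaloisConjugation

theorem LFunction_comp_unit_mul_one_eq_zero {q : ℕ} [NeZero q] {F : ZMod q → ℤ}
    (hF : ∑ a, F a = 0) (hL : ZMod.LFunction (fun a => (F a : ℂ)) 1 = 0) (u : (ZMod q)ˣ) :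
    ZMod.LFunction (fun a => (F (u.val * a) : ℂ)) 1 = 0 := by
  let K := CyclotomicField q ℚ
  have : IsCyclotomicExtension {q} ℚ K := CyclotomicField.isCyclotomicExtension q ℚ
  have : NumberField K := IsCyclotomicExtension.numberField {q} ℚ K
  have : IsGalois ℚ K := IsCyclotomicExtension.isGalois {q} ℚ K
  have hζ := IsCyclotomicExtension.zeta_spec q ℚ K
  obtain ⟨φ, hφ⟩ := exists_ringHom_pow_val_eq_stdAddChar hζ
  obtain ⟨σ₁, hσ₁⟩ := exists_algEquiv_pow_val_eq hζ (1 : (ZMod q)ˣ)⁻¹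
  obtain ⟨σ, hσ⟩ := exists_algEquiv_pow_val_eq hζ u⁻¹
  -- At `b = 0` the form contains `log (1 - 1) = 0`, a logarithm of `1`.
  let α : ZMod q → K := fun b => if b = 0 then 1 else 1 - IsCyclotomicExtension.zeta q ℚ K ^ b.val
  have hα : ∀ b, φ (α b) = Complex.exp (Complex.log (1 - ZMod.stdAddChar b)) := fun b => by
    rcases eq_or_ne b 0 with rfl | hb
    · simp [α]
    · rw [Complex.exp_log (sub_ne_zero.2 fun h => hb (stdAddChar_eq_one_iff.1 h.symm))]
      simp [α, hb, ← hφ]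
  have hvanish : conjForm φ (integralDFT hζ F) (fun b => Complex.log (1 - ZMod.stdAddChar b)) σ₁
      = 0 := by
    rw [conjForm_integralDFT_eq hζ hφ hσ₁ hF]
    simp [hL]
  have hconj := conjForm_eq_zero hα hvanish σ
  rw [conjForm_integralDFT_eq hζ hφ hσ hF] at hconj
  simpa [NeZero.ne q] using hconj

/-! ### Isotypic parts and numbers supported on the primes dividing `q` -/

section CoprimeSplitting

variable {q : ℕ}

lemma exists_mem_factoredNumbers_mul_coprime (hq : q ≠ 0) {n : ℕ} :
    n ≠ 0 → ∃ m a, n = m * a ∧ m ∈ Nat.factoredNumbers q.primeFactors ∧ a.Coprime q := by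
  induction n using induction_on_primes with
  | zero => simp
  | one => exact fun _ => ⟨1, 1, rfl, by simp [Nat.mem_factoredNumbers], Nat.coprime_one_left q⟩
  | prime_mul p n hp ih =>
    intro hpn
    obtain ⟨m, a, rfl, hm, ha⟩ := ih (right_ne_zero_of_mul hpn)
    by_cases hpq : p ∣ q
    · have hp' : p ∈ Nat.factoredNumbers q.primeFactors := by
        simp [Nat.mem_factoredNumbers_iff_primeFactors_subset, hp, hpq, hq, hp.ne_zero]
      exact ⟨p * m, a, (mul_assoc ..).symm, Nat.mul_mem_factoredNumbers hp' hm, ha⟩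
    · exact ⟨m, p * a, mul_left_comm .., hm, .mul_left ((hp.coprime_iff_not_dvd).2 hpq) ha⟩

lemma coprime_of_mem_factoredNumbers_primeFactors {m a : ℕ}
    (hm : m ∈ Nat.factoredNumbers q.primeFactors) (ha : a.Coprime q) : m.Coprime a := by
  refine Nat.Coprime.symm (Nat.coprime_of_dvd fun p hp hpa hpm => ?_)
  exact Nat.Prime.not_coprime_iff_dvd.2
    ⟨p, hp, hpa, Nat.dvd_of_mem_primeFactors (Nat.mem_factoredNumbers'.1 hm p hp hpm)⟩ ha

lemma factoredNumbers_mul_coprime_unique {m a m' a' : ℕ}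
    (hm : m ∈ Nat.factoredNumbers q.primeFactors) (ha : a.Coprime q)
    (hm' : m' ∈ Nat.factoredNumbers q.primeFactors) (ha' : a'.Coprime q) (h : m' * a' = m * a) :
    m' = m ∧ a' = a := by
  have hmm' : m' = m := Nat.dvd_antisymm
    ((coprime_of_mem_factoredNumbers_primeFactors hm' ha).dvd_of_dvd_mul_right ⟨a', h.symm⟩)
    ((coprime_of_mem_factoredNumbers_primeFactors hm ha').dvd_of_dvd_mul_right ⟨a, h⟩)
  subst hmm'
  exact ⟨rfl, Nat.eq_of_mul_eq_mul_left (Nat.pos_of_ne_zero hm.1) h⟩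

end CoprimeSplitting

section IsotypicPart

variable {q : ℕ} [NeZero q]

/-- `φ(q)` times the `χ`-isotypic component of `G` under the action of `(ℤ/q)ˣ` on functions on
`ℤ/q` by multiplication of the argument. -/
noncomputable def isotypicPart (χ : DirichletCharacter ℂ q) (G : ZMod q → ℂ) (x : ZMod q) : ℂ :=
  ∑ u : (ZMod q)ˣ, χ u⁻¹.val * G (u.val * x)

lemma isotypicPart_unit_mul (χ : DirichletCharacter ℂ q) (G : ZMod q → ℂ) (a : (ZMod q)ˣ)
    (x : ZMod q) : isotypicPart χ G (a.val * x) = χ a.val * isotypicPart χ G x := by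
  have hχ : χ a.val * χ a⁻¹.val = 1 := by rw [← map_mul, Units.mul_inv, map_one]
  rw [isotypicPart, isotypicPart,
    ← Equiv.sum_comp (Equiv.mulRight a) fun u => χ u⁻¹.val * G (u.val * x), mul_sum]
  refine sum_congr rfl fun u _ => ?_
  simp only [Equiv.coe_mulRight, mul_inv_rev, Units.val_mul, map_mul, ← mul_assoc, hχ, one_mul]

lemma sum_isotypicPart (χ : DirichletCharacter ℂ q) {G : ZMod q → ℂ} (hG : ∑ a, G a = 0) :
    ∑ x, isotypicPart χ G x = 0 := by
  simp only [isotypicPart]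
  rw [sum_comm]
  refine sum_eq_zero fun u _ => ?_
  have hu : ∑ x, G (u.val * x) = ∑ x, G x := Equiv.sum_comp (Units.mulLeft u) G
  rw [← mul_sum, hu, hG, mul_zero]

lemma sum_isotypicPart_characters (G : ZMod q → ℂ) (x : ZMod q) :
    ∑ χ : DirichletCharacter ℂ q, isotypicPart χ G x = q.totient * G x := by
  simp only [isotypicPart]
  rw [sum_comm, sum_eq_single 1]
  · rw [← sum_mul, DirichletCharacter.sum_characters_eq]
    simp
  · intro u _ hu
    have hu' : u⁻¹.val ≠ 1 := fun h => hu (inv_eq_one.1 (Units.ext h))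
    rw [← sum_mul, DirichletCharacter.sum_characters_eq, if_neg hu', zero_mul]
  · simp

lemma LFunction_isotypicPart (χ : DirichletCharacter ℂ q) (G : ZMod q → ℂ) (s : ℂ) :
    ZMod.LFunction (isotypicPart χ G) s =
      ∑ u : (ZMod q)ˣ, χ u⁻¹.val * ZMod.LFunction (fun a => G (u.val * a)) s := by
  simp only [ZMod.LFunction, isotypicPart, sum_mul, mul_sum]
  rw [sum_comm]
  refine sum_congr rfl fun u _ => sum_congr rfl fun x _ => ?_
  ring

lemma convolution_indicator_factoredNumbers {χ : DirichletCharacter ℂ q} {Φ : ZMod q → ℂ}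
    (hΦ : ∀ (a : (ZMod q)ˣ) x, Φ (a.val * x) = χ a.val * Φ x) {n : ℕ} (hn : n ≠ 0) :
    LSeries.convolution ((Nat.factoredNumbers q.primeFactors).indicator (Φ ·)) (χ ·) n = Φ n := by
  obtain ⟨m, a, rfl, hm, ha⟩ := exists_mem_factoredNumbers_mul_coprime (NeZero.ne q) hn
  rw [LSeries.convolution_def]
  dsimp only
  rw [sum_eq_single (m, a)]
  · have := hΦ (ZMod.unitOfCoprime a ha) m
    rw [ZMod.coe_unitOfCoprime] at this
    rw [Set.indicator_of_mem hm, mul_comm, ← this, Nat.cast_mul, mul_comm]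
  · rintro ⟨m', a'⟩ hmem hne
    by_cases hm' : m' ∈ Nat.factoredNumbers q.primeFactors
    · have ha' : ¬ a'.Coprime q := fun ha' => hne <| Prod.ext_iff.2 <|
        factoredNumbers_mul_coprime_unique hm ha hm' ha' (Nat.mem_divisorsAntidiagonal.1 hmem).1
      rw [χ.map_nonunit (by rwa [ZMod.isUnit_iff_coprime]), mul_zero]
    · rw [Set.indicator_of_notMem hm', zero_mul]
  · exact fun h => absurd (Nat.mem_divisorsAntidiagonal.2 ⟨rfl, hn⟩) h

end IsotypicPart

section FactoredNumbers

lemma hasSum_inv_factoredNumbers_primeFactors {q : ℕ} (hq : q ≠ 0) :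
    HasSum (fun m : Nat.factoredNumbers q.primeFactors => (m : ℝ)⁻¹) (q / q.totient) := by
  let f : ℕ →* ℝ := (invMonoidHom : ℝ →* ℝ).comp (Nat.castRingHom ℝ : ℕ →* ℝ)
  have hf : ∀ {p : ℕ}, p.Prime → ‖f p‖ < 1 := fun {p} hp => by
    simpa [f] using inv_lt_one_of_one_lt₀ (Nat.one_lt_cast.2 hp.one_lt)
  have hEuler := (EulerProduct.summable_and_hasSum_factoredNumbers_prod_filter_prime_geometric hf
    q.primeFactors).2
  have htotient : (q.totient : ℝ) = q * ∏ p ∈ q.primeFactors, (1 - (p : ℝ)⁻¹) := by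
    have := congrArg ((↑) : ℚ → ℝ) (Nat.totient_eq_mul_prod_factors q)
    push_cast at this
    exact this
  have hvalue : ∏ p ∈ q.primeFactors with p.Prime, (1 - f p)⁻¹ = q / q.totient := by
    rw [filter_true_of_mem fun p => Nat.prime_of_mem_primeFactors, prod_inv_distrib, htotient,
      div_mul_cancel_left₀ (mod_cast hq)]
    rfl
  exact hvalue ▸ hEuler

lemma term_indicator_one (s : Set ℕ) (c : ℕ → ℂ) :
    LSeries.term (s.indicator c) 1 = s.indicator fun m => c m / m := by
  ext m
  rcases eq_or_ne m 0 with rfl | hm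
  · by_cases h : 0 ∈ s <;> simp [h]
  · by_cases h : m ∈ s <;> simp [LSeries.term_of_ne_zero hm, h]

lemma LSeries_indicator_one (s : Set ℕ) (c : ℕ → ℂ) :
    LSeries (s.indicator c) 1 = ∑' m : s, c m / m := by
  rw [LSeries, tsum_subtype s fun m => c m / m, term_indicator_one]

lemma tendsto_LSeries_of_LSeriesSummable {c : ℕ → ℂ} {x : ℝ} (hc : LSeriesSummable c x) :
    Tendsto (fun s : ℝ => LSeries c s) (𝓝[>] x) (𝓝 (LSeries c x)) := by
  refine tendsto_tsum_of_dominated_convergence hc.norm (fun n => ?_) ?_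
  · rcases eq_or_ne n 0 with rfl | hn
    · simp
    · simp only [LSeries.term_of_ne_zero hn]
      have hn' : (n : ℂ) ≠ 0 := mod_cast hn
      refine (ContinuousAt.tendsto ?_).mono_left nhdsWithin_le_nhds
      exact continuousAt_const.div
        (Complex.continuous_ofReal.continuousAt.const_cpow (.inl hn')) (by simp [hn'])
  · filter_upwards [self_mem_nhdsWithin] with s hs n
    exact LSeries.norm_term_le_of_re_le_re c (by simpa using (Set.mem_Ioi.1 hs).le) n

variable {q : ℕ} [NeZero q]

lemma summable_factoredNumbers_div (Φ : ZMod q → ℂ) :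
    Summable fun m : Nat.factoredNumbers q.primeFactors => Φ (m : ℕ) / (m : ℕ) := by
  refine .of_norm_bounded
    ((hasSum_inv_factoredNumbers_primeFactors (NeZero.ne q)).summable.mul_left (∑ x, ‖Φ x‖))
    fun m => ?_
  rw [norm_div, Complex.norm_natCast, div_eq_mul_inv]
  gcongr
  exact single_le_sum (f := fun x => ‖Φ x‖) (fun _ _ => norm_nonneg _) (mem_univ _)

lemma LSeriesSummable_indicator_factoredNumbers (Φ : ZMod q → ℂ) {s : ℝ} (hs : 1 ≤ s) :
    LSeriesSummable ((Nat.factoredNumbers q.primeFactors).indicator (Φ ·)) s := by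
  suffices LSeriesSummable ((Nat.factoredNumbers q.primeFactors).indicator (Φ ·)) 1 from
    this.of_re_le_re (by simpa using hs)
  rw [LSeriesSummable, term_indicator_one]
  rw [← summable_subtype_iff_indicator]
  exact summable_factoredNumbers_div Φ

lemma exists_tendsto_inv_LFunction (χ : DirichletCharacter ℂ q) :
    ∃ c, Tendsto (fun s : ℝ => (χ.LFunction s)⁻¹) (𝓝[>] 1) (𝓝 c) := by
  by_cases hχ : χ = 1
  · have hresidue : Tendsto (fun s : ℝ => ((s : ℂ) - 1) * χ.LFunction s) (𝓝[>] 1)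
        (𝓝 (∏ p ∈ q.primeFactors, (1 - (p : ℂ)⁻¹))) := by
      rw [hχ]
      exact (DirichletCharacter.LFunctionTrivChar_residue_one (N := q)).comp
        tendsto_ofReal_nhdsGT_one
    have hprod : ∏ p ∈ q.primeFactors, (1 - (p : ℂ)⁻¹) ≠ 0 := prod_ne_zero_iff.2 fun p hp => by
      rw [sub_ne_zero, ne_comm, Ne, inv_eq_one]
      exact mod_cast (Nat.prime_of_mem_primeFactors hp).ne_one
    have hsub : Tendsto (fun s : ℝ => (s : ℂ) - 1) (𝓝[>] 1) (𝓝 (1 - 1)) :=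
      (tendsto_nhdsWithin_iff.1 tendsto_ofReal_nhdsGT_one).1.sub_const 1
    refine ⟨_, (hsub.mul (hresidue.inv₀ hprod)).congr' ?_⟩
    filter_upwards [self_mem_nhdsWithin] with s hs
    have hs' : (s : ℂ) - 1 ≠ 0 := sub_ne_zero.2 (mod_cast (ne_of_gt hs : s ≠ 1))
    rw [mul_inv, mul_inv_cancel_left₀ hs']
  · have hcont := (DirichletCharacter.differentiable_LFunction hχ).continuous.tendsto 1
    exact ⟨_, ((hcont.mono_left nhdsWithin_le_nhds).comp tendsto_ofReal_nhdsGT_one).inv₀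
      (DirichletCharacter.LFunction_apply_one_ne_zero hχ)⟩

lemma LSeries_indicator_mul_LFunction {χ : DirichletCharacter ℂ q} {Φ : ZMod q → ℂ}
    (hΦ : ∀ (a : (ZMod q)ˣ) x, Φ (a.val * x) = χ a.val * Φ x) {s : ℝ} (hs : 1 < s) :
    LSeries ((Nat.factoredNumbers q.primeFactors).indicator (Φ ·)) s * χ.LFunction s =
      LSeries (Φ ·) s := by
  have hs' : 1 < (s : ℂ).re := by simpa using hs
  rw [DirichletCharacter.LFunction_eq_LSeries χ hs', ← LSeries_convolution'
    (LSeriesSummable_indicator_factoredNumbers Φ hs.le) (ZMod.LSeriesSummable_of_one_lt_re χ hs')]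
  exact LSeries_congr (fun {n} hn => convolution_indicator_factoredNumbers hΦ hn) _

lemma tsum_factoredNumbers_div_eq_zero_of_unit_mul {χ : DirichletCharacter ℂ q} {Φ : ZMod q → ℂ}
    (hΦ : ∀ (a : (ZMod q)ˣ) x, Φ (a.val * x) = χ a.val * Φ x) (hsum : ∑ a, Φ a = 0)
    (hL : ZMod.LFunction Φ 1 = 0) :
    ∑' m : Nat.factoredNumbers q.primeFactors, Φ (m : ℕ) / (m : ℕ) = 0 := by
  obtain ⟨c, hc⟩ := exists_tendsto_inv_LFunction χ
  have hlim := tendsto_LSeries_of_LSeriesSummable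
    (LSeriesSummable_indicator_factoredNumbers Φ le_rfl)
  rw [Complex.ofReal_one, LSeries_indicator_one] at hlim
  have hzero := (tendsto_LSeries_LFunction_one hsum).mul hc
  rw [hL, zero_mul] at hzero
  refine tendsto_nhds_unique hlim (hzero.congr' ?_)
  filter_upwards [self_mem_nhdsWithin] with s hs
  have hne : χ.LFunction s ≠ 0 := χ.LFunction_ne_zero_of_one_le_re
    (.inr (mod_cast (ne_of_gt hs : s ≠ 1))) (by simpa using (Set.mem_Ioi.1 hs).le)
  rw [← LSeries_indicator_mul_LFunction hΦ hs, mul_inv_cancel_right₀ hne]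

theorem tsum_factoredNumbers_div_eq_zero {G : ZMod q → ℂ} (hsum : ∑ a, G a = 0)
    (hL : ∀ u : (ZMod q)ˣ, ZMod.LFunction (fun a => G (u.val * a)) 1 = 0) :
    ∑' m : Nat.factoredNumbers q.primeFactors, G (m : ℕ) / (m : ℕ) = 0 := by
  have hpart (χ : DirichletCharacter ℂ q) :
      ∑' m : Nat.factoredNumbers q.primeFactors, isotypicPart χ G (m : ℕ) / (m : ℕ) = 0 :=
    tsum_factoredNumbers_div_eq_zero_of_unit_mul (isotypicPart_unit_mul χ G)
      (sum_isotypicPart χ hsum) (by simp [LFunction_isotypicPart, hL])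
  have htotal : q.totient * ∑' m : Nat.factoredNumbers q.primeFactors, G (m : ℕ) / (m : ℕ) = 0 := by
    rw [← tsum_mul_left, ← sum_eq_zero fun (χ : DirichletCharacter ℂ q) (_ : χ ∈ univ) => hpart χ,
      ← Summable.tsum_finsetSum fun χ _ => summable_factoredNumbers_div _]
    refine tsum_congr fun m => ?_
    rw [← sum_div, sum_isotypicPart_characters, mul_div_assoc]
  exact (mul_eq_zero.1 htotal).resolve_left (mod_cast (Nat.totient_pos.2 (NeZero.pos q)).ne')

end FactoredNumbers

/-! ### Erdősian functions -/

section Erdosian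

variable {q : ℕ}

lemma IsErdosian.apply_add_mul {f : ℕ → ℤ} (hf : IsErdosian q f) {n : ℕ} (hn : 1 ≤ n) (k : ℕ) :
    f (n + k * q) = f n := by
  induction k with
  | zero => simp
  | succ k ih => rw [add_mul, one_mul, ← add_assoc, hf.1 _ (by omega), ih]

lemma IsErdosian.exists_zmod_lift [NeZero q] {f : ℕ → ℤ} (hf : IsErdosian q f) :
    ∃ F : ZMod q → ℤ, ∀ n : ℕ, 1 ≤ n → F n = f n := by
  refine ⟨fun a => f (a.val + q), fun n hn => ?_⟩
  have hpos : 1 ≤ n % q + q := (NeZero.pos q).trans_le (Nat.le_add_left ..)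
  dsimp only
  rw [ZMod.val_natCast, ← hf.apply_add_mul hpos (n / q), ← hf.1 n hn, add_right_comm,
    mul_comm, Nat.mod_add_div]

lemma tendsto_sum_range_of_tendsto_sum_Icc {f : ℕ → ℤ} {g : ℕ → ℂ} (hg : ∀ n, 1 ≤ n → g n = f n)
    {l : ℝ} (h : Tendsto (fun N : ℕ => ∑ n ∈ Icc 1 N, (f n : ℝ) / n) atTop (𝓝 l)) :
    Tendsto (fun N : ℕ => ∑ n ∈ range N, g n / n) atTop (𝓝 (l : ℂ)) := by
  rw [← tendsto_add_atTop_iff_nat 1]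
  refine ((Complex.continuous_ofReal.tendsto l).comp h).congr fun N => ?_
  rw [sum_range_eq_add_Ico _ N.succ_pos, Nat.cast_zero, div_zero, zero_add, Function.comp_apply,
    Complex.ofReal_sum]
  refine sum_congr (by ext; simp) fun n hn => ?_
  rw [hg n (mem_Ico.1 hn).1]
  push_cast
  rfl

lemma hasSum_inv_factoredNumbers_of_dvd (hq : q ≠ 0) :
    HasSum (fun m : Nat.factoredNumbers q.primeFactors => if q ∣ (m : ℕ) then (m : ℝ)⁻¹ else 0)
      (q.totient : ℝ)⁻¹ := by
  have hmem : q ∈ Nat.factoredNumbers q.primeFactors :=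
    Nat.mem_factoredNumbers_iff_primeFactors_subset.2 ⟨hq, subset_rfl⟩
  let mulq (m : Nat.factoredNumbers q.primeFactors) : Nat.factoredNumbers q.primeFactors :=
    ⟨q * m, Nat.mul_mem_factoredNumbers hmem m.2⟩
  have hinj : Function.Injective mulq := fun m m' h =>
    Subtype.ext (Nat.eq_of_mul_eq_mul_left (Nat.pos_of_ne_zero hq) (congrArg Subtype.val h))
  rw [← hinj.hasSum_iff]
  · have hscaled := (hasSum_inv_factoredNumbers_primeFactors hq).mul_left (q : ℝ)⁻¹
    rw [inv_mul_eq_div, div_div_cancel_left' (mod_cast hq)] at hscaled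
    refine hscaled.congr_fun fun m => ?_
    simp [mulq, mul_comm]
  · rintro ⟨m, hm⟩ hrange
    refine if_neg ?_
    rintro ⟨k, rfl⟩
    exact hrange ⟨⟨k, Nat.mem_factoredNumbers_of_dvd hm (Dvd.intro_left q rfl)⟩, rfl⟩

-- The terms `([q ∤ m] + G(1) G(m)) / m` are nonnegative, sum to `(q - 1) / φ(q)`, and the one
-- at `m = 1` equals `2`.
lemma two_mul_totient_lt_of_hasSum_zero (hq : 1 < q) {G : ZMod q → ℝ} (hG : ∀ x, |G x| ≤ 1)
    (hG₀ : G 0 = 0) (hG₁ : |G 1| = 1)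
    (h : HasSum (fun m : Nat.factoredNumbers q.primeFactors => G (m : ℕ) / (m : ℕ)) 0) :
    2 * q.totient < q := by
  have hq₀ : q ≠ 0 := by omega
  have htotient : (0 : ℝ) < q.totient := mod_cast Nat.totient_pos.2 (by omega)
  have hsum := ((hasSum_inv_factoredNumbers_primeFactors hq₀).sub
    (hasSum_inv_factoredNumbers_of_dvd hq₀)).add (h.mul_left (G 1))
  have hone : 1 ∈ Nat.factoredNumbers q.primeFactors := by simp [Nat.mem_factoredNumbers]
  have hle := le_hasSum hsum ⟨1, hone⟩ fun m _ => by
    split_ifs with hd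
    · simp [(ZMod.natCast_eq_zero_iff _ _).2 hd, hG₀]
    · have habs : |G 1 * G (m : ℕ)| ≤ 1 := by rw [abs_mul, hG₁, one_mul]; exact hG _
      rw [sub_zero, inv_eq_one_div, ← mul_div_assoc, ← add_div]
      exact div_nonneg (by linarith [neg_le_of_abs_le habs]) (Nat.cast_nonneg _)
  have hsq : G 1 * G 1 = 1 := by rw [← abs_mul_abs_self, hG₁, one_mul]
  simp only [Nat.dvd_one, hq.ne', if_false, Nat.cast_one, inv_one, sub_zero, div_one, hsq,
    mul_zero, add_zero] at hle
  rw [← one_div, ← sub_div, le_div_iff₀ htotient] at hle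
  have : (2 * q.totient : ℝ) < q := by linarith
  exact_mod_cast this

lemma hasSum_factoredNumbers_div_of_tendsto_zero [NeZero q] {F : ZMod q → ℤ}
    (h : Tendsto (fun N : ℕ => ∑ n ∈ range N, (F n : ℂ) / n) atTop (𝓝 0)) :
    HasSum (fun m : Nat.factoredNumbers q.primeFactors => (F (m : ℕ) : ℝ) / (m : ℕ)) 0 := by
  have hsum : ∑ a, (F a : ℂ) = 0 := sum_eq_zero_of_tendsto_sum_div (Φ := fun a => (F a : ℂ)) h
  have hL : ZMod.LFunction (fun a => (F a : ℂ)) 1 = 0 :=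
    tendsto_nhds_unique (tendsto_sum_div_LFunction_one hsum) h
  have htsum := tsum_factoredNumbers_div_eq_zero hsum
    (LFunction_comp_unit_mul_one_eq_zero (mod_cast hsum) hL)
  have hhas := (summable_factoredNumbers_div fun a => (F a : ℂ)).hasSum
  rw [htsum] at hhas
  rw [← Complex.hasSum_ofReal]
  simpa using hhas

end Erdosian

theorem erdos_true_prime_power_or_two_primes_general (q : ℕ) (hq : 1 < q)
    (h : q ≤ 2 * q.totient) : ErdosConjectureHolds q := by
  rintro ⟨f, hf, hlim⟩
  have : NeZero q := ⟨by omega⟩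
  obtain ⟨F, hF⟩ := hf.exists_zmod_lift
  have hF₀ : F 0 = 0 := by
    rw [← ZMod.natCast_self q, hF q hq.le, hf.2.2 q hq.le dvd_rfl]
  have hF_abs {n : ℕ} (hn : 1 ≤ n) (hd : ¬ q ∣ n) : |F n| = 1 := by
    rw [hF n hn, abs_eq zero_le_one]
    exact hf.2.1 n hn hd
  have hF_le (x : ZMod q) : |F x| ≤ 1 := by
    rcases eq_or_ne x 0 with rfl | hx
    · simp [hF₀]
    · have hd : ¬ q ∣ x.val := by rwa [← ZMod.natCast_eq_zero_iff, ZMod.natCast_zmod_val]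
      have := (hF_abs (Nat.pos_of_ne_zero fun h₀ => hd (by simp [h₀])) hd).le
      rwa [ZMod.natCast_zmod_val] at this
  have hF₁ : |F 1| = 1 := by simpa using hF_abs le_rfl (by simpa using hq.ne')
  have hlim' := tendsto_sum_range_of_tendsto_sum_Icc (g := fun n => (F n : ℂ))
    (fun n hn => by rw [hF n hn]) hlim
  refine (two_mul_totient_lt_of_hasSum_zero hq (G := fun x => (F x : ℝ)) (fun x => ?_) ?_ ?_
    (hasSum_factoredNumbers_div_of_tendsto_zero (by simpa using hlim'))).not_ge h
  · exact_mod_cast hF_le x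
  · exact_mod_cast hF₀
  · exact_mod_cast hF₁

lemma three_le_of_prime_of_odd {p : ℕ} (hp : p.Prime) (hodd : Odd p) : 3 ≤ p := by
  obtain ⟨k, rfl⟩ := hodd
  have := hp.two_le
  omega

lemma prime_pow_le_two_mul_totient {p k : ℕ} (hp : p.Prime) (hk : 1 ≤ k) :
    p ^ k ≤ 2 * (p ^ k).totient := by
  rw [Nat.totient_prime_pow hp hk, ← pow_sub_one_mul (by omega : k ≠ 0), mul_left_comm]
  have := hp.two_le
  gcongr
  omega

lemma mul_primes_le_two_mul_totient {p₁ p₂ : ℕ} (hp₁ : p₁.Prime) (hp₂ : p₂.Prime)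
    (h₁ : 3 ≤ p₁) (h₂ : 3 ≤ p₂) (hne : p₁ ≠ p₂) : p₁ * p₂ ≤ 2 * (p₁ * p₂).totient := by
  rw [Nat.totient_mul ((Nat.coprime_primes hp₁ hp₂).2 hne), Nat.totient_prime hp₁,
    Nat.totient_prime hp₂]
  obtain ⟨a, rfl⟩ := Nat.exists_eq_add_of_le h₁
  obtain ⟨b, rfl⟩ := Nat.exists_eq_add_of_le h₂
  have hab : 1 ≤ a + b := by omega
  have hsub (c : ℕ) : 3 + c - 1 = 2 + c := by omega
  rw [hsub, hsub]
  nlinarith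

theorem erdos_true_prime_power_or_two_primes (q : ℕ)
    (h : (∃ p k : ℕ, p.Prime ∧ Odd p ∧ 1 ≤ k ∧ q = p ^ k) ∨
         (∃ p₁ p₂ : ℕ, p₁.Prime ∧ p₂.Prime ∧ Odd p₁ ∧ Odd p₂ ∧ p₁ ≠ p₂ ∧ q = p₁ * p₂)) :
    ErdosConjectureHolds q := by
  rcases h with ⟨p, k, hp, -, hk, rfl⟩ | ⟨p₁, p₂, hp₁, hp₂, hodd₁, hodd₂, hne, rfl⟩
  · exact erdos_true_prime_power_or_two_primes_general _
      (Nat.one_lt_pow (Nat.one_le_iff_ne_zero.1 hk) hp.one_lt) (prime_pow_le_two_mul_totient hp hk)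
  · exact erdos_true_prime_power_or_two_primes_general _ (Right.one_lt_mul' hp₁.one_lt hp₂.one_lt)
      (mul_primes_le_two_mul_totient hp₁ hp₂ (three_le_of_prime_of_odd hp₁ hodd₁)
        (three_le_of_prime_of_odd hp₂ hodd₂) hne)
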